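/- Let m ≥ 3. Let a⁰ = (a⁰₁,…,a⁰_m) : ℝ^m → ℂ^m be a C^∞ map, regarded as the coefficients of the smooth complex vector field L₀ = Σᵢ a⁰ᵢ(x) ∂/∂xᵢ, let p₀ ∈ ℝ^m, h ∈ ℕ, and ε > 0. Then there exists a C^∞ map a : ℝ^m → ℂ^m such that sup over x ∈ ℝ^m and 0 ≤ j ≤ h of ‖iteratedFDeriv ℝ j (a − a⁰) x‖ is < ε, and such that for every open set U ⊆ ℝ^m containing p₀ and every C¹ function u : U → ℂ satisfying Σᵢ aᵢ(x) · (fderiv ℝ u x)(eᵢ) = 0 for all x ∈ U, one has fderiv ℝ u p₀ = 0. -/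

import Mathlib

open Complex

/-!
Suppose that near `p` the field `L` is, up to a non-vanishing factor, a divergence-free field `C`
with a first integral `w` such that `dw(p) ≠ 0` and `Im w ≥ κ‖x - p‖²`. Choose disjoint open pockets
accumulating at `p` which `w` maps into discs lying in disjoint vertical strips, and add to `L` a
small field equal to `φᵢ ∂ᵢ` on the pockets labelled `i`, every label occurring infinitely often.
For a solution `u` of the perturbed equation, `C u` lives in the pockets. Integration by parts shows
that the Cauchy transform `ζ ↦ ∫ C u / (ζ - w)` extends holomorphically across the strip of a given
pocket, so the integral of `C u` over this pocket vanishes. As `C u` is there proportional to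
`φᵢ ∂ᵢu` with `φᵢ > 0`, this forces `∂ᵢu(p) = 0`.

Such a `C` exists after a small change of the given field `a`. In dimension at least `3` there is a
real covector annihilated by `a(p)`; a change of the first-order jet makes the Levi form in this
direction non-zero, and then some quadratic correction of the covector is annihilated by the field
to first order and has positive definite imaginary part. It extends, together with a system of
coordinates, to solutions of order `h + 1` of the equation. The field of cofactors of their Jacobian
matrix is divergence-free, annihilates them exactly, and is a multiple of a field `C^h`-close to
`a`.
-/

open MeasureTheory Set Filter Topology
open scoped ContDiff

section CauchyTransform

variable {X : Type*} [MeasurableSpace X] {μ : Measure X} {k w : X → ℂ} {c ζ₀ : ℂ} {r R δ : ℝ}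

/-- The Cauchy transform of the image under `w` of the complex measure `k • μ`. -/
noncomputable def cauchyTransform (μ : Measure X) (k w : X → ℂ) (ζ : ℂ) : ℂ :=
  ∫ x, k x * (ζ - w x)⁻¹ ∂μ

lemma norm_mul_inv_sub_le (hδ : 0 < δ) {a b ζ : ℂ} (h : a ≠ 0 → δ ≤ ‖ζ - b‖) :
    ‖a * (ζ - b)⁻¹‖ ≤ ‖a‖ * δ⁻¹ := by
  rcases eq_or_ne a 0 with ha | ha
  · simp [ha]
  · rw [norm_mul, norm_inv]
    gcongr
    exact h ha

lemma integrable_mul_inv_sub (hk : Integrable k μ) (hw : Measurable w) (hδ : 0 < δ)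
    (hfar : ∀ x, k x ≠ 0 → δ ≤ ‖ζ₀ - w x‖) : Integrable (fun x => k x * (ζ₀ - w x)⁻¹) μ :=
  (hk.norm.mul_const δ⁻¹).mono' (hk.aestronglyMeasurable.mul
    (by fun_prop : Measurable fun x => (ζ₀ - w x)⁻¹).aestronglyMeasurable)
    (Eventually.of_forall fun x => norm_mul_inv_sub_le hδ (hfar x))

lemma differentiableAt_cauchyTransform (hk : Integrable k μ) (hw : Measurable w) (hδ : 0 < δ)
    (hfar : ∀ x, k x ≠ 0 → δ ≤ ‖ζ₀ - w x‖) : DifferentiableAt ℂ (cauchyTransform μ k w) ζ₀ := by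
  have hfar' : ∀ x, k x ≠ 0 → ∀ ζ ∈ Metric.ball ζ₀ (δ / 2), δ / 2 ≤ ‖ζ - w x‖ := by
    intro x hx ζ hζ
    have := norm_sub_le_norm_sub_add_norm_sub ζ₀ ζ (w x)
    rw [mem_ball_iff_norm'] at hζ
    linarith [hfar x hx]
  refine (hasDerivAt_integral_of_dominated_loc_of_deriv_le (F := fun ζ x => k x * (ζ - w x)⁻¹)
    (F' := fun ζ x => -(k x * (ζ - w x)⁻¹) * (ζ - w x)⁻¹)
    (bound := fun x => ‖k x‖ * (δ / 2)⁻¹ * (δ / 2)⁻¹)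
    (Metric.ball_mem_nhds ζ₀ (half_pos hδ))
    (Eventually.of_forall fun ζ => hk.aestronglyMeasurable.mul
      (by fun_prop : Measurable fun x => (ζ - w x)⁻¹).aestronglyMeasurable)
    (integrable_mul_inv_sub hk hw hδ hfar)
    ((integrable_mul_inv_sub hk hw hδ hfar).neg.aestronglyMeasurable.mul
      (by fun_prop : Measurable fun x => (ζ₀ - w x)⁻¹).aestronglyMeasurable)
    (Eventually.of_forall fun x ζ hζ => ?_) ((hk.norm.mul_const _).mul_const _)
    (Eventually.of_forall fun x ζ hζ => ?_)).2.differentiableAt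
  · have hδ' : 0 < δ / 2 := half_pos hδ
    refine (norm_mul_inv_sub_le hδ' fun h => hfar' x (fun hx => h (by simp [hx])) ζ hζ).trans ?_
    rw [norm_neg]
    gcongr
    exact norm_mul_inv_sub_le hδ' fun hx => hfar' x hx ζ hζ
  · rcases eq_or_ne (k x) 0 with hx | hx
    · simpa [hx] using hasDerivAt_const ζ (0 : ℂ)
    · have hne : ζ - w x ≠ 0 := norm_pos_iff.1 ((half_pos hδ).trans_le (hfar' x hx ζ hζ))
      exact ((((hasDerivAt_id ζ).sub_const (w x)).fun_inv hne).const_mul (k x)).congr_deriv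
        (by simp only [id_eq, div_eq_mul_inv, sq, mul_inv]; ring)

lemma cauchyTransform_indicator_add_compl (hk : Integrable k μ) (hw : Measurable w) (hδ : 0 < δ)
    (hfar : ∀ x, k x ≠ 0 → δ ≤ ‖ζ₀ - w x‖) {B : Set X} (hB : MeasurableSet B) :
    cauchyTransform μ (B.indicator k) w ζ₀ + cauchyTransform μ (Bᶜ.indicator k) w ζ₀ =
      cauchyTransform μ k w ζ₀ := by
  have hmul : ∀ (S : Set X) x, S.indicator k x * (ζ₀ - w x)⁻¹ =
      S.indicator (fun y => k y * (ζ₀ - w y)⁻¹) x := fun S x =>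
    (indicator_mul_left S k fun y => (ζ₀ - w y)⁻¹).symm
  simp only [cauchyTransform, hmul]
  rw [integral_indicator hB, integral_indicator hB.compl,
    integral_add_compl hB (integrable_mul_inv_sub hk hw hδ hfar)]

lemma sub_le_norm_circleMap_sub (hR : 0 ≤ R) {z : ℂ} (hz : dist z c ≤ r) (θ : ℝ) :
    R - r ≤ ‖circleMap c R θ - z‖ := by
  have hθ : dist (circleMap c R θ) c = R := circleMap_mem_sphere c hR θ
  rw [← dist_eq_norm]
  linarith [dist_triangle (circleMap c R θ) z c]

lemma integrable_deriv_circleMap_mul_cauchyKernel [SFinite μ] (hk : Integrable k μ)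
    (hw : Measurable w) (hR : 0 ≤ R) (hrR : r < R) (hkr : ∀ x, k x ≠ 0 → dist (w x) c ≤ r) :
    Integrable
      (fun q : ℝ × X => deriv (circleMap c R) q.1 * (k q.2 * (circleMap c R q.1 - w q.2)⁻¹))
      ((volume.restrict (Ioc 0 (2 * Real.pi))).prod μ) := by
  have hk' : Integrable (fun q : ℝ × X => k q.2)
      ((volume.restrict (Ioc 0 (2 * Real.pi))).prod μ) := by
    simpa using (integrable_const (1 : ℂ)).mul_prod hk
  have hderiv : Measurable fun q : ℝ × X => deriv (circleMap c R) q.1 :=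
    (measurable_deriv _).comp measurable_fst
  have hkernel : Measurable fun q : ℝ × X => (circleMap c R q.1 - w q.2)⁻¹ :=
    (((continuous_circleMap c R).measurable.comp measurable_fst).sub
      (hw.comp measurable_snd)).inv
  refine (hk'.norm.mul_const (R - r)⁻¹).const_mul R |>.mono'
    (hderiv.aestronglyMeasurable.mul (hk'.aestronglyMeasurable.mul hkernel.aestronglyMeasurable))
    (Eventually.of_forall fun q => ?_)
  have hnorm : ‖deriv (circleMap c R) q.1‖ = R := by simp [deriv_circleMap, abs_of_nonneg hR]
  rw [norm_mul, hnorm]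
  gcongr
  exact norm_mul_inv_sub_le (sub_pos.2 hrR) fun hx => sub_le_norm_circleMap_sub hR (hkr _ hx) _

lemma circleIntegral_cauchyTransform [SFinite μ] (hk : Integrable k μ) (hw : Measurable w)
    (hR : 0 ≤ R) (hrR : r < R) (hkr : ∀ x, k x ≠ 0 → dist (w x) c ≤ r) :
    ∮ ζ in C(c, R), cauchyTransform μ k w ζ = 2 * Real.pi * I * ∫ x, k x ∂μ := by
  have hpi : (0 : ℝ) ≤ 2 * Real.pi := by positivity
  have hpoint : ∀ x, ∫ θ in Ioc 0 (2 * Real.pi),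
      deriv (circleMap c R) θ * (k x * (circleMap c R θ - w x)⁻¹) = 2 * Real.pi * I * k x := by
    intro x
    rcases eq_or_ne (k x) 0 with hx | hx
    · simp [hx]
    · have hcauchy := circleIntegral.integral_sub_inv_of_mem_ball
        (Metric.mem_ball.2 ((hkr x hx).trans_lt hrR))
      rw [circleIntegral, intervalIntegral.integral_of_le hpi] at hcauchy
      rw [← hcauchy, ← integral_mul_const]
      exact integral_congr_ae (Eventually.of_forall fun θ => by simp only [smul_eq_mul]; ring)
  simp only [circleIntegral, intervalIntegral.integral_of_le hpi, smul_eq_mul, cauchyTransform]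
  simp_rw [← integral_const_mul]
  rw [integral_integral_swap
    (integrable_deriv_circleMap_mul_cauchyKernel hk hw hR hrR hkr)]
  simp_rw [hpoint]

/-- The open annulus of radii `r < R` around `c`. -/
def annulus (c : ℂ) (r R : ℝ) : Set ℂ := {ζ | r < dist ζ c ∧ dist ζ c < R}

/-- The open downward half-strip of width `2 * R` around the vertical line through `c`, up to height
`c.im + y`. -/
def halfStrip (c : ℂ) (R y : ℝ) : Set ℂ := {ζ | |ζ.re - c.re| < R ∧ ζ.im < c.im + y}

lemma isOpen_annulus (c : ℂ) (r R : ℝ) : IsOpen (annulus c r R) := by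
  rw [annulus, ofPred_and]
  exact (isOpen_lt (by fun_prop) (by fun_prop)).inter (isOpen_lt (by fun_prop) (by fun_prop))

lemma isOpen_halfStrip (c : ℂ) (R y : ℝ) : IsOpen (halfStrip c R y) := by
  rw [halfStrip, ofPred_and]
  exact (isOpen_lt (by fun_prop) (by fun_prop)).inter (isOpen_lt (by fun_prop) (by fun_prop))

lemma isPreconnected_annulus (c : ℂ) (hr : 0 ≤ r) (R : ℝ) : IsPreconnected (annulus c r R) := by
  have himage : annulus c r R = (fun q : ℝ × ℝ => circleMap c q.1 q.2) '' (Ioo r R ×ˢ univ) := by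
    ext ζ
    constructor
    · rintro ⟨h1, h2⟩
      refine ⟨(‖ζ - c‖, (ζ - c).arg), ⟨⟨by rwa [← dist_eq_norm], by rwa [← dist_eq_norm]⟩,
        mem_univ _⟩, ?_⟩
      simp [circleMap, norm_mul_exp_arg_mul_I]
    · rintro ⟨⟨ρ, θ⟩, ⟨hρ, -⟩, rfl⟩
      have hdist : dist (circleMap c ρ θ) c = ρ :=
        circleMap_mem_sphere c (hr.trans hρ.1.le) θ
      simpa [annulus, hdist] using hρ
  rw [himage]
  exact (isPreconnected_Ioo.prod isPreconnected_univ).image _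
    (by unfold circleMap; fun_prop)

lemma convex_halfStrip (c : ℂ) (R y : ℝ) : Convex ℝ (halfStrip c R y) := by
  simp_rw [halfStrip, ← Real.dist_eq, ofPred_and]
  exact ((convex_ball c.re R).linear_preimage reLm).inter (convex_halfSpace_im_lt _)

lemma isPreconnected_annulus_union_halfStrip (c : ℂ) (hr : 0 ≤ r) (hrR : r < R) :
    IsPreconnected (annulus c r R ∪ halfStrip c R (-r)) := by
  have hdist : dist (c - ((r + R) / 2 : ℝ) * I) c = (r + R) / 2 := by
    rw [dist_eq_norm, sub_sub_cancel_left, norm_neg, norm_mul, norm_I, mul_one, norm_real,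
      Real.norm_of_nonneg (by linarith)]
  refine (isPreconnected_annulus c hr R).union (c - ((r + R) / 2 : ℝ) * I) ?_ ?_
    (convex_halfStrip c R (-r)).isPreconnected
  · simp only [annulus, mem_ofPred_eq, hdist]
    exact ⟨by linarith, by linarith⟩
  · simp only [halfStrip, mem_ofPred_eq, sub_re, sub_im, re_ofReal_mul, im_ofReal_mul, I_re, I_im]
    exact ⟨by simpa using hr.trans_lt hrR, by linarith⟩

lemma ball_subset_halfStrip (c : ℂ) (R : ℝ) : Metric.ball c R ⊆ halfStrip c R R := fun ζ hζ => by
  rw [mem_ball_iff_norm] at hζ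
  have him := (le_abs_self _).trans_lt ((abs_im_le_norm (ζ - c)).trans_lt hζ)
  rw [sub_im] at him
  exact ⟨(abs_re_le_norm (ζ - c)).trans_lt hζ, by linarith⟩

lemma lt_dist_of_mem_annulus_union_halfStrip {ζ : ℂ} (hζ : ζ ∈ annulus c r R ∪ halfStrip c R (-r)) :
    r < dist ζ c := by
  rcases hζ with hζ | ⟨-, hζ⟩
  · exact hζ.1
  · have him := (neg_le_abs _).trans (abs_im_le_norm (ζ - c))
    rw [sub_im] at him
    rw [dist_eq_norm]
    linarith

lemma eqOn_cauchyTransform (hk : Integrable k μ) (hw : Measurable w)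
    (hr : 0 ≤ r) (hrR : r < R) (hkr : ∀ x, k x ≠ 0 → dist (w x) c ≤ r) {H : ℂ → ℂ}
    (hH : DifferentiableOn ℂ H (halfStrip c R R)) {b : ℝ}
    (hHk : ∀ ζ : ℂ, |ζ.re - c.re| < R → ζ.im < b → cauchyTransform μ k w ζ = H ζ) :
    EqOn (cauchyTransform μ k w) H (annulus c r R ∪ halfStrip c R (-r)) := by
  set V : Set ℂ := annulus c r R ∪ halfStrip c R (-r)
  have hVopen : IsOpen V := (isOpen_annulus c r R).union (isOpen_halfStrip c R (-r))
  have hVsub : V ⊆ halfStrip c R R :=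
    union_subset (fun ζ hζ => ball_subset_halfStrip c R hζ.2) fun ζ hζ =>
      ⟨hζ.1, by linarith [hζ.2]⟩
  have hT : DifferentiableOn ℂ (cauchyTransform μ k w) V := fun ζ hζ =>
    (differentiableAt_cauchyTransform hk hw
      (sub_pos.2 (lt_dist_of_mem_annulus_union_halfStrip hζ)) fun x hx => by
        rw [← dist_eq_norm]
        linarith [dist_triangle ζ (w x) c, hkr x hx]).differentiableWithinAt
  let z : ℂ := ⟨c.re, min b (c.im - r) - 1⟩
  have hzb : z.im < b := by dsimp only [z]; linarith [min_le_left b (c.im - r)]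
  have hzr : z.im < c.im + -r := by dsimp only [z]; linarith [min_le_right b (c.im - r)]
  have hzR : |z.re - c.re| < R := by simpa [z] using hr.trans_lt hrR
  refine AnalyticOnNhd.eqOn_of_preconnected_of_eventuallyEq (z₀ := z) (hT.analyticOnNhd hVopen)
    ((hH.mono hVsub).analyticOnNhd hVopen) (isPreconnected_annulus_union_halfStrip c hr hrR)
    (Or.inr ⟨hzR, hzr⟩) ?_
  filter_upwards [(isOpen_halfStrip c R (-r)).mem_nhds ⟨hzR, hzr⟩,
    (isOpen_lt continuous_im continuous_const).mem_nhds hzb] with ζ hζ hζb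
  exact hHk ζ hζ.1 hζb

lemma integral_eq_zero_of_cauchyTransform_eq [SFinite μ] (hk : Integrable k μ) (hw : Measurable w)
    (hr : 0 ≤ r) (hrR : r < R) (hkr : ∀ x, k x ≠ 0 → dist (w x) c ≤ r) {H : ℂ → ℂ}
    (hH : DifferentiableOn ℂ H (halfStrip c R R)) {b : ℝ}
    (hHk : ∀ ζ : ℂ, |ζ.re - c.re| < R → ζ.im < b → cauchyTransform μ k w ζ = H ζ) :
    ∫ x, k x ∂μ = 0 := by
  obtain ⟨ρ, hrρ, hρR⟩ := exists_between hrR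
  have hρ : 0 ≤ ρ := hr.trans hrρ.le
  have hint : ∮ ζ in C(c, ρ), H ζ = 0 :=
    circleIntegral_eq_zero_of_differentiable_on_off_countable hρ countable_empty
      (hH.continuousOn.mono
        ((Metric.closedBall_subset_ball hρR).trans (ball_subset_halfStrip c R)))
      fun ζ hζ => hH.differentiableAt ((isOpen_halfStrip c R R).mem_nhds
        (ball_subset_halfStrip c R (Metric.ball_subset_ball hρR.le hζ.1)))
  have heq : EqOn (cauchyTransform μ k w) H (Metric.sphere c ρ) :=
    (eqOn_cauchyTransform hk hw hr hrR hkr hH hHk).mono fun ζ hζ =>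
      Or.inl ⟨hrρ.trans_eq hζ.symm, hζ.trans_lt hρR⟩
  rw [← circleIntegral.integral_congr hρ heq,
    circleIntegral_cauchyTransform hk hw hρ hrρ hkr] at hint
  simpa [Real.pi_ne_zero] using hint

end CauchyTransform

section VectorFields

variable {ι : Type*} [Fintype ι] [DecidableEq ι] {c : (ι → ℝ) → ι → ℂ} {f g : (ι → ℝ) → ℂ}
  {x : ι → ℝ}

/-- The `i`-th partial derivative of a complex function on `ℝ^ι`. -/
noncomputable def partialDeriv (i : ι) (f : (ι → ℝ) → ℂ) (x : ι → ℝ) : ℂ :=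
  fderiv ℝ f x (Pi.single i 1)

/-- The value of the complexification of a real-linear form on a complex vector. -/
noncomputable def pairing : (ι → ℂ) →ₗ[ℂ] ((ι → ℝ) →L[ℝ] ℂ) →ₗ[ℂ] ℂ :=
  LinearMap.mk₂ ℂ (fun b φ => ∑ i, b i * φ (Pi.single i 1))
    (fun b b' φ => by simp only [Pi.add_apply, add_mul, Finset.sum_add_distrib])
    (fun z b φ => by simp only [Pi.smul_apply, smul_eq_mul, mul_assoc, Finset.mul_sum])
    (fun b φ φ' => by simp only [_root_.add_apply, mul_add, Finset.sum_add_distrib])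
    (fun z b φ => by
      simp only [FunLike.coe_smul, Pi.smul_apply, smul_eq_mul, Finset.mul_sum,
        mul_left_comm])

lemma pairing_apply (b : ι → ℂ) (φ : (ι → ℝ) →L[ℝ] ℂ) :
    pairing b φ = ∑ i, b i * φ (Pi.single i 1) := rfl

/-- The action on functions of the complex vector field with coefficients `c`. -/
noncomputable def applyField (c : (ι → ℝ) → ι → ℂ) (f : (ι → ℝ) → ℂ) (x : ι → ℝ) : ℂ :=
  pairing (c x) (fderiv ℝ f x)

lemma applyField_eq_sum : applyField c f x = ∑ i, c x i * partialDeriv i f x := rfl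

lemma contDiff_partialDeriv {n k : ℕ∞ω} (hf : ContDiff ℝ n f) (hk : k + 1 ≤ n) (i : ι) :
    ContDiff ℝ k (partialDeriv i f) :=
  (hf.fderiv_right hk).clm_apply contDiff_const

lemma contDiff_applyField {n k : ℕ∞ω} (hc : ContDiff ℝ k c) (hf : ContDiff ℝ n f)
    (hk : k + 1 ≤ n) : ContDiff ℝ k (applyField c f) :=
  ContDiff.sum fun i _ => (contDiff_pi.1 hc i).mul (contDiff_partialDeriv hf hk i)

lemma continuous_applyField (hc : Continuous c) (hf : ContDiff ℝ 1 f) :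
    Continuous (applyField c f) :=
  (contDiff_applyField (contDiff_zero.2 hc) hf (by norm_num)).continuous

lemma applyField_add (hf : DifferentiableAt ℝ f x) (hg : DifferentiableAt ℝ g x) :
    applyField c (fun y => f y + g y) x = applyField c f x + applyField c g x := by
  simp only [applyField, fderiv_fun_add hf hg, map_add]

lemma applyField_mul (hf : DifferentiableAt ℝ f x) (hg : DifferentiableAt ℝ g x) :
    applyField c (fun y => f y * g y) x = f x * applyField c g x + g x * applyField c f x := by
  simp only [applyField, fderiv_fun_mul hf hg, map_add, map_smul, smul_eq_mul]

lemma applyField_comp {φ : ℂ → ℂ} {φ' : ℂ} (hφ : HasDerivAt φ φ' (f x))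
    (hf : DifferentiableAt ℝ f x) :
    applyField c (fun y => φ (f y)) x = φ' * applyField c f x := by
  have hchain : HasFDerivAt (fun y => φ (f y)) (φ' • fderiv ℝ f x) x :=
    hφ.comp_hasFDerivAt x hf.hasFDerivAt
  rw [applyField, hchain.fderiv, map_smul, smul_eq_mul, applyField]

lemma applyField_congr (h : f =ᶠ[𝓝 x] g) : applyField c f x = applyField c g x := by
  simp only [applyField, h.fderiv_eq]

lemma applyField_const (z : ℂ) : applyField c (fun _ => z) x = 0 := by
  simp [applyField]

lemma applyField_eq_zero_of_notMem_tsupport (hx : x ∉ tsupport f) : applyField c f x = 0 :=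
  (applyField_congr (notMem_tsupport_iff_eventuallyEq.1 hx)).trans (applyField_const 0)

lemma hasCompactSupport_applyField (hf : HasCompactSupport f) :
    HasCompactSupport (applyField c f) :=
  HasCompactSupport.intro hf fun _ hx => applyField_eq_zero_of_notMem_tsupport hx

end VectorFields

section IntegrationByParts

lemma contDiff_mul_inv_sub {E : Type*} [NormedAddCommGroup E] [NormedSpace ℝ E] {χ w : E → ℂ}
    {ζ : ℂ} {n : ℕ∞ω} (hw : ContDiff ℝ n w) (hχ : ContDiff ℝ n χ) (hζ : ∀ x ∈ tsupport χ, w x ≠ ζ) :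
    ContDiff ℝ n fun x => χ x * (ζ - w x)⁻¹ := by
  refine contDiff_iff_contDiffAt.2 fun x => ?_
  by_cases hx : x ∈ tsupport χ
  · exact hχ.contDiffAt.mul
      ((contDiffAt_const.sub hw.contDiffAt).inv (sub_ne_zero.2 (hζ x hx).symm))
  · refine contDiffAt_const (c := 0) |>.congr_of_eventuallyEq ?_
    filter_upwards [notMem_tsupport_iff_eventuallyEq.1 hx] with y hy
    simp [hy]

variable {ι : Type*} [Fintype ι] [DecidableEq ι] {C : (ι → ℝ) → ι → ℂ} {f g u w χ : (ι → ℝ) → ℂ}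
  {x : ι → ℝ} {ζ : ℂ}

/-- A vector field of vanishing divergence, i.e. one whose formal transpose is `-C`. -/
def IsDivergenceFree (C : (ι → ℝ) → ι → ℂ) : Prop :=
  ∀ x, ∑ i, partialDeriv i (fun y => C y i) x = 0

lemma integral_applyField_eq_zero (hC : ContDiff ℝ 1 C) (hdiv : IsDivergenceFree C)
    (hf : ContDiff ℝ 1 f) (hfs : HasCompactSupport f) : ∫ x, applyField C f x = 0 := by
  have hCi : ∀ i, ContDiff ℝ 1 fun y => C y i := contDiff_pi.1 hC
  have hf' : ∀ i, Continuous (partialDeriv i f) := fun i =>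
    (contDiff_partialDeriv hf (k := 0) (by norm_num) i).continuous
  have hfs' : ∀ i, HasCompactSupport (partialDeriv i f) := fun i =>
    (hfs.fderiv (𝕜 := ℝ)).comp_left
      (g := fun φ : (ι → ℝ) →L[ℝ] ℂ => φ (Pi.single i 1)) rfl
  have hCf' : ∀ i, Integrable fun x => C x i * partialDeriv i f x := fun i =>
    ((hCi i).continuous.mul (hf' i)).integrable_of_hasCompactSupport (hfs' i).mul_left
  have hC'f : ∀ i, Integrable fun x => partialDeriv i (fun y => C y i) x * f x := fun i =>
    ((contDiff_partialDeriv (hCi i) (k := 0) (by norm_num) i).continuous.mul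
      hf.continuous).integrable_of_hasCompactSupport hfs.mul_left
  have hparts : ∀ i, ∫ x, C x i * partialDeriv i f x =
      -∫ x, partialDeriv i (fun y => C y i) x * f x := fun i =>
    integral_mul_fderiv_eq_neg_fderiv_mul_of_integrable (hC'f i) (hCf' i)
      (((hCi i).continuous.mul hf.continuous).integrable_of_hasCompactSupport hfs.mul_left)
      (fun x _ => (hCi i).differentiable one_ne_zero x)
      (fun x _ => hf.differentiable one_ne_zero x)
  simp only [applyField_eq_sum]
  rw [integral_finsetSum _ fun i _ => hCf' i, Finset.sum_congr rfl fun i _ => hparts i,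
    Finset.sum_neg_distrib, ← integral_finsetSum _ fun i _ => hC'f i]
  simp only [← Finset.sum_mul, hdiv _, zero_mul, integral_zero, neg_zero]

lemma integral_mul_applyField_eq_neg (hC : ContDiff ℝ 1 C) (hdiv : IsDivergenceFree C)
    (hf : ContDiff ℝ 1 f) (hg : ContDiff ℝ 1 g) (hgs : HasCompactSupport g) :
    ∫ x, f x * applyField C g x = -∫ x, g x * applyField C f x := by
  have hzero := integral_applyField_eq_zero hC hdiv (hf.mul hg) hgs.mul_left
  have hfg : Integrable fun x => f x * applyField C g x :=
    (hf.continuous.mul (continuous_applyField hC.continuous hg)).integrable_of_hasCompactSupport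
      (hasCompactSupport_applyField hgs).mul_left
  have hgf : Integrable fun x => g x * applyField C f x :=
    (hg.continuous.mul (continuous_applyField hC.continuous hf)).integrable_of_hasCompactSupport
      hgs.mul_right
  rw [eq_neg_iff_add_eq_zero, ← integral_add hfg hgf, ← hzero]
  exact integral_congr_ae (Eventually.of_forall fun x => (applyField_mul
    (hf.differentiable one_ne_zero x) (hg.differentiable one_ne_zero x)).symm)

lemma applyField_mul_inv_sub (hw : DifferentiableAt ℝ w x) (hχ : DifferentiableAt ℝ χ x)
    (hCw : applyField C w x = 0) (hζ : w x ≠ ζ) :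
    applyField C (fun y => χ y * (ζ - w y)⁻¹) x = applyField C χ x * (ζ - w x)⁻¹ := by
  have hne : ζ - w x ≠ 0 := sub_ne_zero.2 hζ.symm
  rw [applyField_mul hχ ((hw.const_sub ζ).fun_inv hne),
    applyField_comp (φ := fun z => (ζ - z)⁻¹) (((hasDerivAt_id (w x)).const_sub ζ).fun_inv hne) hw,
    hCw]
  ring

lemma cauchyTransform_mul_applyField (hC : ContDiff ℝ 1 C) (hdiv : IsDivergenceFree C)
    (hw : ContDiff ℝ 1 w) (hCw : ∀ x, applyField C w x = 0) (hu : ContDiff ℝ 1 u)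
    (hχ : ContDiff ℝ 1 χ) (hχs : HasCompactSupport χ) (hζ : ∀ x ∈ tsupport χ, w x ≠ ζ) :
    cauchyTransform volume (fun x => χ x * applyField C u x) w ζ =
      -cauchyTransform volume (fun x => u x * applyField C χ x) w ζ := by
  have hG : ∀ x, applyField C (fun y => χ y * (ζ - w y)⁻¹) x = applyField C χ x * (ζ - w x)⁻¹ := by
    intro x
    by_cases hx : x ∈ tsupport χ
    · exact applyField_mul_inv_sub (hw.differentiable one_ne_zero x)
        (hχ.differentiable one_ne_zero x) (hCw x) (hζ x hx)
    · rw [applyField_eq_zero_of_notMem_tsupport hx, zero_mul,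
        applyField_eq_zero_of_notMem_tsupport fun h => hx (tsupport_mul_subset_left h)]
  have hparts := integral_mul_applyField_eq_neg hC hdiv hu (contDiff_mul_inv_sub hw hχ hζ)
    hχs.mul_right
  simp only [hG] at hparts
  simp only [cauchyTransform, mul_assoc, hparts, neg_neg]
  exact integral_congr_ae (Eventually.of_forall fun x => by ring)

end IntegrationByParts

section LocalExtension

variable {E F : Type*} [NormedAddCommGroup E] [NormedSpace ℝ E] [HasContDiffBump E]
  [NormedAddCommGroup F] [NormedSpace ℝ F]

lemma exists_contDiff_eventuallyEq {n : ℕ∞} {u : E → F} {U : Set E} {p : E} (hU : U ∈ 𝓝 p)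
    (hu : ContDiffOn ℝ n u U) : ∃ v : E → F, ContDiff ℝ n v ∧ v =ᶠ[𝓝 p] u := by
  obtain ⟨r, hr, hball⟩ := Metric.mem_nhds_iff.1 hU
  let χ : ContDiffBump p := ⟨r / 4, r / 2, by positivity, by linarith⟩
  refine ⟨fun x => χ x • u x, contDiff_iff_contDiffAt.2 fun x => ?_, ?_⟩
  · by_cases hx : x ∈ tsupport χ
    · rw [χ.tsupport_eq] at hx
      have hxball : x ∈ Metric.ball p r := Metric.closedBall_subset_ball (half_lt_self hr) hx
      exact χ.contDiff.contDiffAt.smul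
        ((hu.mono hball).contDiffAt (Metric.isOpen_ball.mem_nhds hxball))
    · refine (contDiffAt_const (c := 0)).congr_of_eventuallyEq ?_
      filter_upwards [notMem_tsupport_iff_eventuallyEq.1 hx] with y hy
      simp [hy]
  · filter_upwards [χ.eventuallyEq_one] with x hx
    simp [hx]

lemma exists_contDiff_mul_eq_one {n : ℕ∞} {f : E → ℂ} (hf : ContDiff ℝ n f) {p : E}
    (hp : f p ≠ 0) : ∃ θ : E → ℂ, ContDiff ℝ n θ ∧ ∀ᶠ x in 𝓝 p, θ x * f x = 1 := by
  have hne : ∀ᶠ x in 𝓝 p, f x ≠ 0 := hf.continuous.continuousAt.eventually_ne hp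
  obtain ⟨θ, hθ, hθf⟩ := exists_contDiff_eventuallyEq hne (hf.contDiffOn.inv fun _ hx => hx)
  refine ⟨θ, hθ, ?_⟩
  filter_upwards [hθf, hne] with x h1 h2
  rw [h1, Pi.inv_apply, inv_mul_cancel₀ h2]

end LocalExtension

section IsSmall

variable {E E' F : Type*} [NormedAddCommGroup E] [NormedSpace ℝ E] [NormedAddCommGroup E']
  [NormedSpace ℝ E'] [NormedAddCommGroup F] [NormedSpace ℝ F] {f g : E → F} {h : ℕ} {ε δ η : ℝ}

/-- A smooth map whose derivatives of order at most `h` are all of norm less than `ε`; this is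
smallness in the topology of uniform `C^h` convergence. -/
structure IsSmall (h : ℕ) (ε : ℝ) (f : E → F) : Prop where
  contDiff : ContDiff ℝ ∞ f
  norm_lt : ∀ x, ∀ j ≤ h, ‖iteratedFDeriv ℝ j f x‖ < ε

namespace IsSmall

lemma pos (hf : IsSmall h ε f) : 0 < ε := (norm_nonneg _).trans_lt (hf.norm_lt 0 0 h.zero_le)

lemma mono (hf : IsSmall h ε f) (hεδ : ε ≤ δ) : IsSmall h δ f :=
  ⟨hf.contDiff, fun x j hj => (hf.norm_lt x j hj).trans_le hεδ⟩

lemma contDiffAt (hf : IsSmall h ε f) (j : ℕ) (x : E) : ContDiffAt ℝ j f x :=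
  hf.contDiff.contDiffAt.of_le (by exact_mod_cast le_top)

lemma add (hf : IsSmall h ε f) (hg : IsSmall h δ g) : IsSmall h (ε + δ) (f + g) := by
  refine ⟨hf.contDiff.add hg.contDiff, fun x j hj => ?_⟩
  rw [iteratedFDeriv_add_apply (hf.contDiffAt j x) (hg.contDiffAt j x)]
  exact (norm_add_le _ _).trans_lt (add_lt_add (hf.norm_lt x j hj) (hg.norm_lt x j hj))

lemma const_smul (hf : IsSmall h ε f) (hη : 0 < η) : IsSmall h (η * ε) fun x => η • f x := by
  refine ⟨hf.contDiff.const_smul η, fun x j hj => ?_⟩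
  rw [iteratedFDeriv_const_smul_apply' (hf.contDiffAt j x), norm_smul, Real.norm_of_nonneg hη.le]
  exact mul_lt_mul_of_pos_left (hf.norm_lt x j hj) hη

lemma smul {A : Type*} [NormedField A] [NormedAlgebra ℝ A] [NormedSpace A F] [IsScalarTower ℝ A F]
    {k : E → A} (hk : IsSmall h δ k) (hf : IsSmall h ε f) :
    IsSmall h (2 ^ h * δ * ε) fun x => k x • f x := by
  refine ⟨hk.contDiff.smul hf.contDiff, fun x j hj => ?_⟩
  have hδ := hk.pos
  have hε := hf.pos
  calc ‖iteratedFDeriv ℝ j (fun y => k y • f y) x‖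
      ≤ ∑ i ∈ Finset.range (j + 1), (j.choose i : ℝ) * ‖iteratedFDeriv ℝ i k x‖ *
          ‖iteratedFDeriv ℝ (j - i) f x‖ :=
        norm_iteratedFDeriv_smul_le hk.contDiff hf.contDiff x (by exact_mod_cast le_top)
    _ < ∑ i ∈ Finset.range (j + 1), (j.choose i : ℝ) * δ * ε := by
        refine Finset.sum_lt_sum_of_nonempty Finset.nonempty_range_add_one fun i hi => ?_
        have hij : i ≤ j := Nat.lt_succ_iff.1 (Finset.mem_range.1 hi)
        have hchoose : (0 : ℝ) < j.choose i := by exact_mod_cast Nat.choose_pos hij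
        exact mul_lt_mul'' (mul_lt_mul_of_pos_left (hk.norm_lt x i (hij.trans hj)) hchoose)
          (hf.norm_lt x (j - i) ((Nat.sub_le j i).trans hj)) (by positivity) (by positivity)
    _ = 2 ^ j * δ * ε := by
        rw [← Finset.sum_mul, ← Finset.sum_mul]
        congr 2
        exact_mod_cast Nat.sum_range_choose j
    _ ≤ 2 ^ h * δ * ε := by
        gcongr
        exact one_le_two

lemma comp_clm_sub (hf : IsSmall h ε f) (ℓ : E' →L[ℝ] E) {K : ℝ} (hK : 1 ≤ K) (hℓ : ‖ℓ‖ ≤ K)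
    (p : E') : IsSmall h (ε * K ^ h) fun x => f (ℓ (x - p)) := by
  have hcomp : ContDiff ℝ ∞ (f ∘ ℓ) := hf.contDiff.comp ℓ.contDiff
  refine ⟨hcomp.comp (contDiff_id.sub contDiff_const), fun x j hj => ?_⟩
  have hshift : iteratedFDeriv ℝ j (fun x => f (ℓ (x - p))) x =
      iteratedFDeriv ℝ j (f ∘ ℓ) (x - p) := iteratedFDeriv_comp_sub (f := f ∘ ℓ) j p x
  rw [hshift, ℓ.iteratedFDeriv_comp_right hf.contDiff _ (by exact_mod_cast le_top)]
  calc _ ≤ ‖iteratedFDeriv ℝ j f (ℓ (x - p))‖ * ∏ _i : Fin j, ‖ℓ‖ :=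
        ContinuousMultilinearMap.norm_compContinuousLinearMap_le _ _
    _ ≤ ‖iteratedFDeriv ℝ j f (ℓ (x - p))‖ * K ^ h := by
        rw [Finset.prod_const, Finset.card_univ, Fintype.card_fin]
        gcongr
        exact (pow_le_pow_left₀ (norm_nonneg ℓ) hℓ j).trans (pow_le_pow_right₀ hK hj)
    _ < ε * K ^ h := mul_lt_mul_of_pos_right (hf.norm_lt _ j hj) (by positivity)

end IsSmall

lemma exists_isSmall (hf : ContDiff ℝ ∞ f) (hfs : HasCompactSupport f) (h : ℕ) :
    ∃ K, IsSmall h K f := by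
  have hbound : ∀ j : ℕ, ∃ K, ∀ x, ‖iteratedFDeriv ℝ j f x‖ ≤ K := fun j =>
    (hfs.iteratedFDeriv j).exists_bound_of_continuous
      (hf.continuous_iteratedFDeriv (by exact_mod_cast le_top))
  choose K hK using hbound
  refine ⟨1 + ∑ j ∈ Finset.range (h + 1), |K j|, hf, fun x j hj => ?_⟩
  have hle : |K j| ≤ ∑ j ∈ Finset.range (h + 1), |K j| :=
    Finset.single_le_sum (f := fun j => |K j|) (fun _ _ => abs_nonneg _)
      (Finset.mem_range.2 (Nat.lt_succ_of_le hj))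
  linarith [hK j x, le_abs_self (K j)]

lemma exists_isSmall_smul (hf : ContDiff ℝ ∞ f) (hfs : HasCompactSupport f) (h : ℕ) (hε : 0 < ε) :
    ∃ η : ℝ, 0 < η ∧ IsSmall h ε fun x => η • f x := by
  obtain ⟨K, hK⟩ := exists_isSmall hf hfs h
  refine ⟨ε / K, div_pos hε hK.pos, (hK.const_smul (div_pos hε hK.pos)).mono ?_⟩
  rw [div_mul_cancel₀ ε hK.pos.ne']

lemma exists_isSmall_smul_add_ne_zero (hf : ContDiff ℝ ∞ f) (hfs : HasCompactSupport f) (h : ℕ)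
    (hε : 0 < ε) (A : ℝ) : ∃ η : ℝ, A + η ≠ 0 ∧ IsSmall h ε fun x => η • f x := by
  obtain ⟨η, hη, hsmall⟩ := exists_isSmall_smul hf hfs h hε
  rcases ne_or_eq (A + η) 0 with hA | hA
  · exact ⟨η, hA, hsmall⟩
  · refine ⟨2⁻¹ * η, fun hA' => by linarith, ?_⟩
    simpa only [smul_smul] using
      (hsmall.const_smul (by norm_num : (0 : ℝ) < 2⁻¹)).mono (by linarith)

/-- Rescaling the cutoff by `t` in the direction of `s` costs `t ^ (-h)` in the derivatives of order
at most `h` and gains `t ^ (h + 1)` from the vanishing factor. -/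
lemma exists_isSmall_eq_pow_smul (hf : ContDiff ℝ ∞ f) (hfs : HasCompactSupport f)
    (s : E →L[ℝ] ℝ) (p : E) (h : ℕ) (hε : 0 < ε) :
    ∃ V : E → F, IsSmall h ε V ∧ ∀ᶠ x in 𝓝 p, V x = s (x - p) ^ (h + 1) • f x := by
  let χ : ContDiffBump (0 : ℝ) := ⟨1, 2, one_pos, one_lt_two⟩
  let k : ℝ → ℝ := fun t => χ t * t ^ (h + 1)
  obtain ⟨K, hK⟩ := exists_isSmall (f := k) (χ.contDiff.mul (contDiff_id.pow _))
    χ.hasCompactSupport.mul_right h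
  obtain ⟨M, hM⟩ := exists_isSmall hf hfs h
  set D : ℝ := 2 ^ h * (K * (1 + ‖s‖) ^ h) * M
  have hD : 0 < D := by have := hK.pos; have := hM.pos; positivity
  set t : ℝ := min 1 (ε / D)
  have ht : 0 < t := by positivity
  have hs : ‖t⁻¹ • s‖ ≤ t⁻¹ * (1 + ‖s‖) := by
    rw [norm_smul, norm_inv, Real.norm_of_nonneg ht.le]
    gcongr
    linarith
  have hone : 1 ≤ t⁻¹ * (1 + ‖s‖) := one_le_mul_of_one_le_of_one_le
    ((one_le_inv₀ ht).2 (min_le_left _ _)) (by linarith [norm_nonneg s])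
  refine ⟨_, (((hK.comp_clm_sub (t⁻¹ • s) hone hs p).const_smul (pow_pos ht (h + 1))).smul hM).mono
    ?_, ?_⟩
  · calc 2 ^ h * (t ^ (h + 1) * (K * (t⁻¹ * (1 + ‖s‖)) ^ h)) * M = t * D := by
          rw [mul_pow, inv_pow, pow_succ]
          field_simp
          ring
      _ ≤ ε / D * D := by gcongr; exact min_le_right _ _
      _ = ε := div_mul_cancel₀ ε hD.ne'
  · have htends : Tendsto (fun x => (t⁻¹ • s) (x - p)) (𝓝 p) (𝓝 0) := by
      have : Continuous fun x => (t⁻¹ • s) (x - p) := by fun_prop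
      simpa using this.tendsto p
    filter_upwards [htends.eventually χ.eventuallyEq_one] with x hx
    simp only [k]
    rw [hx]
    simp only [Pi.one_apply, one_mul, smul_apply, smul_eq_mul]
    rw [← mul_pow, mul_inv_cancel_left₀ ht.ne']

end IsSmall

section VanishingIntegrals

variable {ι : Type*} [Fintype ι] [DecidableEq ι] {C : (ι → ℝ) → ι → ℂ} {w u χ : (ι → ℝ) → ℂ}
  {B : Set (ι → ℝ)} {c : ℂ} {r R : ℝ}

/-- Below the real axis the Cauchy transform of `B.indicator (C u)` along the first integral `w`
equals minus those of `u * C χ` and of the part of `C u` outside `B`, which both extend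
holomorphically to a half strip containing the image of `B`. -/
lemma setIntegral_applyField_eq_zero (hC : ContDiff ℝ 1 C) (hdiv : IsDivergenceFree C)
    (hw : ContDiff ℝ 1 w) (hCw : ∀ x, applyField C w x = 0) (hu : ContDiff ℝ 1 u)
    (hχ : ContDiff ℝ 1 χ) (hχs : HasCompactSupport χ) (hB : MeasurableSet B) (hr : 0 ≤ r)
    (hrR : r < R) (hχB : ∀ x ∈ B, χ x = 1) (him : ∀ x ∈ tsupport χ, 0 ≤ (w x).im)
    (hhigh : ∀ x, applyField C χ x ≠ 0 → c.im + R ≤ (w x).im) (hBw : ∀ x ∈ B, dist (w x) c ≤ r)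
    (hout : ∀ x, χ x * applyField C u x ≠ 0 → x ∉ B → R ≤ |(w x).re - c.re|) :
    ∫ x in B, applyField C u x = 0 := by
  set k : (ι → ℝ) → ℂ := fun x => χ x * applyField C u x with hkdef
  have hk : Integrable k := (hχ.continuous.mul (continuous_applyField hC.continuous hu))
    |>.integrable_of_hasCompactSupport hχs.mul_right
  have hg : Integrable fun x => u x * applyField C χ x :=
    (hu.continuous.mul (continuous_applyField hC.continuous hχ)).integrable_of_hasCompactSupport
      (hasCompactSupport_applyField hχs).mul_left
  have hkB : ∫ x, B.indicator k x = ∫ x in B, applyField C u x := by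
    rw [integral_indicator hB]
    exact setIntegral_congr_fun hB fun x hx => by simp only [hkdef, hχB x hx, one_mul]
  rw [← hkB]
  refine integral_eq_zero_of_cauchyTransform_eq (c := c) (b := 0) (hk.indicator hB)
    hw.continuous.measurable hr hrR (fun x hx => hBw x (mem_of_indicator_ne_zero hx))
    (H := fun ζ => -cauchyTransform volume (fun x => u x * applyField C χ x) w ζ -
      cauchyTransform volume (Bᶜ.indicator k) w ζ) (fun ζ hζ => ?_) (fun ζ _ hζ => ?_)
  · have hgζ := differentiableAt_cauchyTransform (ζ₀ := ζ) hg hw.continuous.measurable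
      (sub_pos.2 hζ.2) fun x hx => by
        linarith [hhigh x (right_ne_zero_of_mul hx), neg_abs_le (ζ - w x).im,
          abs_im_le_norm (ζ - w x), sub_im ζ (w x)]
    have hkζ := differentiableAt_cauchyTransform (ζ₀ := ζ) (hk.indicator hB.compl)
      hw.continuous.measurable (sub_pos.2 hζ.1) fun x hx => by
        have hxB := mem_of_indicator_ne_zero hx
        rw [indicator_of_mem hxB] at hx
        have hre : |(ζ - w x).re| ≤ ‖ζ - w x‖ := abs_re_le_norm _
        rw [sub_re, abs_sub_comm] at hre
        linarith [hout x hx hxB, abs_sub_le (w x).re ζ.re c.re]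
    exact (hgζ.neg.sub hkζ).differentiableWithinAt
  · have hfar : ∀ x ∈ tsupport χ, -ζ.im ≤ ‖ζ - w x‖ := fun x hx => by
      linarith [him x hx, neg_abs_le (ζ - w x).im, abs_im_le_norm (ζ - w x), sub_im ζ (w x)]
    rw [eq_sub_iff_add_eq, cauchyTransform_indicator_add_compl hk hw.continuous.measurable
      (neg_pos.2 hζ) (fun x hx => hfar x (subset_tsupport χ (left_ne_zero_of_mul hx))) hB]
    refine cauchyTransform_mul_applyField hC hdiv hw hCw hu hχ hχs fun x hx hwx => ?_
    exact (neg_pos.2 hζ).not_ge (by simpa [hwx] using hfar x hx)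

end VanishingIntegrals

section Pockets

variable {E : Type*} [PseudoMetricSpace E] {w : E → ℂ} {p x : E}
  {B : ℕ → Set E} {c : ℕ → ℂ} {s : ℕ → ℝ}

/-- Bounded open sets `B n` shrinking to `p` which `w` maps into discs with centres `c n` and radii
`s n` in such a way that the vertical strip of half-width `2 * s n` around `c n` meets the image of
no other `B l`. -/
structure IsSeparatedPockets (w : E → ℂ) (p : E) (B : ℕ → Set E) (c : ℕ → ℂ) (s : ℕ → ℝ) :
    Prop where
  isOpen : ∀ n, IsOpen (B n)
  nonempty : ∀ n, (B n).Nonempty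
  isBounded : Bornology.IsBounded (⋃ n, B n)
  tendsto : Tendsto B atTop (𝓝 p).smallSets
  radius_pos : ∀ n, 0 < s n
  dist_lt : ∀ n, ∀ x ∈ B n, dist (w x) (c n) < s n
  le_abs_re_sub : ∀ n l, l ≠ n → ∀ x ∈ B l, 2 * s n ≤ |(w x).re - (c n).re|
  tendsto_im : Tendsto (fun n => (c n).im + 2 * s n) atTop (𝓝 (w p).im)

lemma IsSeparatedPockets.eq_of_mem (hB : IsSeparatedPockets w p B c s) {n l : ℕ} (hn : x ∈ B n)
    (hl : x ∈ B l) : l = n := by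
  by_contra hln
  have hre : |(w x - c n).re| < s n :=
    (abs_re_le_norm _).trans_lt (dist_eq_norm (w x) _ ▸ hB.dist_lt n x hn)
  rw [sub_re] at hre
  linarith [hB.le_abs_re_sub n l hln x hl, hB.radius_pos n]

end Pockets

section PocketsAlongLine

variable {E : Type*} [NormedAddCommGroup E] [NormedSpace ℝ E] {w : E → ℂ} {p e : E}

lemma exists_forall_abs_re_sub_le (hw : DifferentiableAt ℝ w p) (he : (fderiv ℝ w p e).re = 1) :
    ∃ τ : ℝ, 0 < τ ∧
      ∀ t, 0 ≤ t → t ≤ τ → |(w (p + t • e)).re - (w p).re - t| ≤ t / 4 := by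
  have hline : HasDerivAt (fun t : ℝ => p + t • e) e 0 := by
    simpa using ((hasDerivAt_id (0 : ℝ)).smul_const e).const_add p
  have hw' : HasFDerivAt w (fderiv ℝ w p) (p + (0 : ℝ) • e) := by simpa using hw.hasFDerivAt
  have hre : HasDerivAt (fun t : ℝ => (w (p + t • e)).re) 1 0 := by
    rw [← he]
    exact reCLM.hasFDerivAt.comp_hasDerivAt (0 : ℝ) (hw'.comp_hasDerivAt (0 : ℝ) hline)
  obtain ⟨r, hr, hball⟩ := Metric.nhds_basis_closedBall.eventually_iff.1
    ((hasDerivAt_iff_isLittleO_nhds_zero.1 hre).def (by norm_num : (0 : ℝ) < 1 / 4))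
  refine ⟨r, hr, fun t ht htr => ?_⟩
  have hbound := @hball t (by simpa [abs_of_nonneg ht] using htr)
  simp only [zero_add, zero_smul, add_zero, smul_eq_mul, mul_one, Real.norm_eq_abs,
    abs_of_nonneg ht] at hbound
  linarith

lemma le_abs_sub_of_geometric {τ : ℝ} (hτ : 0 < τ) {y : ℕ → ℝ}
    (hy : ∀ n, |y n - τ / 4 ^ n| ≤ τ / 4 ^ n / 4) {n l : ℕ} (hln : l ≠ n) {b : ℝ}
    (hb : |b - y l| ≤ τ / 4 ^ l / 16) : 2 * (τ / 4 ^ n / 16) ≤ |b - y n| := by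
  have hpos : ∀ k : ℕ, 0 < τ / 4 ^ k := fun k => by positivity
  have hquarter : ∀ {k j : ℕ}, k < j → τ / 4 ^ j ≤ τ / 4 ^ k / 4 := fun {k j} hkj => by
    rw [div_div, ← pow_succ]
    exact div_le_div_of_nonneg_left hτ.le (by positivity) (pow_le_pow_right₀ (by norm_num) hkj)
  have hn := abs_le.1 (hy n)
  have hl := abs_le.1 (hy l)
  rw [abs_le] at hb
  rcases lt_or_gt_of_ne hln with hlt | hgt
  · exact le_trans (by linarith [hquarter hlt, hpos l, hpos n]) (le_abs_self _)
  · exact le_trans (by linarith [hquarter hgt, hpos n]) (neg_le_abs _)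

lemma exists_isSeparatedPockets (hwc : Continuous w) (hw : DifferentiableAt ℝ w p)
    (he : (fderiv ℝ w p e).re = 1) : ∃ B c s, IsSeparatedPockets w p B c s := by
  obtain ⟨τ, hτ, hwτ⟩ := exists_forall_abs_re_sub_le hw he
  set t : ℕ → ℝ := fun n => τ / 4 ^ n
  have ht : ∀ n, 0 < t n := fun n => by positivity
  have htτ : ∀ n, t n ≤ τ := fun n => div_le_self hτ.le (one_le_pow₀ (by norm_num))
  have ht0 : Tendsto t atTop (𝓝 0) := by
    simpa [t, div_eq_mul_inv] using (tendsto_pow_atTop_nhds_zero_of_lt_one (r := (1 / 4 : ℝ))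
      (by norm_num) (by norm_num)).const_mul τ
  refine ⟨fun n => Metric.ball p (t n * (1 + ‖e‖)) ∩ w ⁻¹' Metric.ball (w (p + t n • e)) (t n / 16),
    fun n => w (p + t n • e), fun n => t n / 16, ⟨fun n =>
      Metric.isOpen_ball.inter (Metric.isOpen_ball.preimage hwc), fun n => ⟨p + t n • e, ?_, ?_⟩,
      ?_, ?_, fun n => by linarith [ht n], fun n x hx => hx.2, fun n l hln x hx => ?_, ?_⟩⟩
  · rw [Metric.mem_ball, dist_self_add_left, norm_smul, Real.norm_of_nonneg (ht n).le]
    linarith [ht n]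
  · exact Metric.mem_ball_self (by linarith [ht n])
  · refine (Metric.isBounded_ball (x := p) (r := τ * (1 + ‖e‖))).subset (iUnion_subset fun n x hx =>
      Metric.ball_subset_ball (by gcongr; exact htτ n) hx.1)
  · refine tendsto_smallSets_iff.2 fun U hU => ?_
    obtain ⟨r, hr, hrU⟩ := Metric.mem_nhds_iff.1 hU
    have hto : Tendsto (fun n => t n * (1 + ‖e‖)) atTop (𝓝 0) := by
      simpa using ht0.mul_const (1 + ‖e‖)
    filter_upwards [hto.eventually (gt_mem_nhds hr)] with n hn x hx
    exact hrU (Metric.ball_subset_ball hn.le hx.1)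
  · have hb : |(w x - w (p + t l • e)).re| < t l / 16 :=
      (abs_re_le_norm _).trans_lt (mem_ball_iff_norm.1 hx.2)
    have hsub := le_abs_sub_of_geometric hτ (y := fun n => (w (p + t n • e)).re - (w p).re)
      (fun n => hwτ (t n) (ht n).le (htτ n)) hln (b := (w x).re - (w p).re)
      (by rw [sub_re] at hb; simpa only [sub_sub_sub_cancel_right] using hb.le)
    simpa only [sub_sub_sub_cancel_right] using hsub
  · have hcont : Continuous fun t : ℝ => (w (p + t • e)).im + 2 * (t / 16) := by fun_prop
    simpa [Function.comp_def] using (hcont.tendsto 0).comp ht0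

end PocketsAlongLine

section DivergenceFreePerturbation

lemma exists_frequently_eq (ι : Type*) [Countable ι] [Nonempty ι] :
    ∃ σ : ℕ → ι, ∀ i, ∃ᶠ n in atTop, σ n = i := by
  obtain ⟨g, hg⟩ := exists_surjective_nat ι
  refine ⟨fun n => g n.unpair.1, fun i => frequently_atTop.2 fun N => ?_⟩
  obtain ⟨k, hk⟩ := hg i
  exact ⟨Nat.pair k N, Nat.right_le_pair k N, by simpa using hk⟩

lemma exists_isSmall_ofReal {E ι : Type*} [NormedAddCommGroup E] [NormedSpace ℝ E]
    [FiniteDimensional ℝ E] [Fintype ι] {S : ι → Set E} (hS : ∀ i, IsOpen (S i))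
    (hSb : ∀ i, Bornology.IsBounded (S i)) (h : ℕ) {ε : ℝ} (hε : 0 < ε) :
    ∃ φ : ι → E → ℝ, (∀ i x, 0 ≤ φ i x) ∧ (∀ i, Function.support (φ i) = S i) ∧
      IsSmall h ε fun x i => (φ i x : ℂ) := by
  choose f hfs hf hfr using fun i => (hS i).exists_contDiff_support_eq (n := ⊤)
  have hF : ContDiff ℝ ∞ fun x i => (f i x : ℂ) :=
    contDiff_pi.2 fun i => ofRealCLM.contDiff.comp (hf i)
  have hFs : HasCompactSupport fun x i => (f i x : ℂ) := by
    refine HasCompactSupport.of_support_subset_isCompact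
      (Bornology.isBounded_iUnion.2 hSb).isCompact_closure fun x hx => ?_
    obtain ⟨i, hi⟩ := Function.ne_iff.1 hx
    exact subset_closure (mem_iUnion.2 ⟨i, hfs i ▸ fun hfx => hi (by simp [hfx])⟩)
  obtain ⟨η, hη, hsmall⟩ := exists_isSmall_smul hF hFs h hε
  refine ⟨fun i x => η * f i x,
    fun i x => mul_nonneg hη.le (hfr i (mem_range_self x)).1, fun i => ?_, ?_⟩
  · rw [← hfs i]
    ext x
    simp [hη.ne']
  · simpa [Pi.smul_def, real_smul] using hsmall

lemma setIntegral_ne_zero_of_re_mul_pos {E : Type*} [TopologicalSpace E] [MeasurableSpace E]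
    [OpensMeasurableSpace E] {μ : Measure E} [μ.IsOpenPosMeasure] {B : Set E} (hB : IsOpen B)
    (hne : B.Nonempty) {f : E → ℂ} (hf : IntegrableOn f B μ) {z : ℂ}
    (hpos : ∀ x ∈ B, 0 < (z * f x).re) : ∫ x in B, f x ∂μ ≠ 0 := by
  intro hzero
  have hint : IntegrableOn (fun x => z * f x) B μ := hf.const_mul z
  have hre : ∫ x in B, (z * f x).re ∂μ = 0 := by
    refine (reCLM.integral_comp_comm hint).trans ?_
    rw [integral_const_mul, hzero, mul_zero, map_zero]
  refine hre.not_gt <|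
    (setIntegral_pos_iff_support_of_nonneg_ae ?_ (reCLM.integrable_comp hint)).2 ?_
  · exact (ae_restrict_iff' hB.measurableSet).2 (Eventually.of_forall fun x hx => (hpos x hx).le)
  · exact (hB.measure_pos μ hne).trans_le (measure_mono fun x hx => ⟨(hpos x hx).ne', hx⟩)

lemma fderiv_eq_zero_of_partialDeriv {ι : Type*} [Finite ι] [DecidableEq ι] {u : (ι → ℝ) → ℂ}
    {x : ι → ℝ} (h : ∀ i, partialDeriv i u x = 0) : fderiv ℝ u x = 0 := by
  refine ContinuousLinearMap.coe_injective ((Pi.basisFun ℝ ι).ext fun i => ?_)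
  simpa [partialDeriv] using h i

variable {ι : Type*} [Fintype ι] [DecidableEq ι] {a C : (ι → ℝ) → ι → ℂ} {w u : (ι → ℝ) → ℂ}
  {p : ι → ℝ} {κ : ℝ} {B : ℕ → Set (ι → ℝ)} {c : ℕ → ℂ} {s : ℕ → ℝ}

lemma IsSeparatedPockets.eventually_setIntegral_applyField_eq_zero
    (hB : IsSeparatedPockets w p B c s) (hC : ContDiff ℝ 1 C) (hdiv : IsDivergenceFree C)
    (hw : ContDiff ℝ 1 w) (hCw : ∀ x, applyField C w x = 0) (hκ : 0 < κ)
    (hwκ : ∀ᶠ x in 𝓝 p, κ * ‖x - p‖ ^ 2 ≤ (w x).im) (hw0 : (w p).im = 0) (hu : ContDiff ℝ 1 u)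
    (hCu : ∀ᶠ x in 𝓝 p, applyField C u x ≠ 0 → ∃ n, x ∈ B n) :
    ∀ᶠ n in atTop, ∫ x in B n, applyField C u x = 0 := by
  obtain ⟨R, hR, hball⟩ := Metric.nhds_basis_closedBall.eventually_iff.1 (hwκ.and hCu)
  let bump : ContDiffBump p := ⟨R / 2, R, by positivity, by linarith⟩
  set χ : (ι → ℝ) → ℂ := fun x => (bump x : ℂ) with hχdef
  have hχ : ContDiff ℝ 1 χ := ofRealCLM.contDiff.comp bump.contDiff
  have hχsub : tsupport χ ⊆ Metric.closedBall p R :=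
    (tsupport_comp_subset ofReal_zero bump).trans_eq bump.tsupport_eq
  have hχs : HasCompactSupport χ := bump.hasCompactSupport.comp_left ofReal_zero
  have hχone : ∀ x ∈ Metric.ball p (R / 2), χ =ᶠ[𝓝 x] fun _ => 1 := fun x hx => by
    filter_upwards [bump.eventuallyEq_one_of_mem_ball hx] with y hy
    simp [hχdef, hy]
  have hlow := hB.tendsto_im.eventually_lt_const (u := κ * (R / 2) ^ 2) (by rw [hw0]; positivity)
  filter_upwards [hlow, tendsto_smallSets_iff.1 hB.tendsto _
    (Metric.ball_mem_nhds p (half_pos hR))] with n hn hBn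
  refine setIntegral_applyField_eq_zero (c := c n) (r := s n) (R := 2 * s n) hC hdiv hw hCw hu hχ
    hχs (hB.isOpen n).measurableSet (hB.radius_pos n).le (by linarith [hB.radius_pos n])
    (fun x hx => (hχone x (hBn hx)).self_of_nhds) (fun x hx => ?_) (fun x hx => ?_)
    (fun x hx => (hB.dist_lt n x hx).le) fun x hx hxB => ?_
  · exact le_trans (by positivity) (hball (hχsub hx)).1
  · have hxs : x ∈ tsupport χ := by
      by_contra hx'
      exact hx (applyField_eq_zero_of_notMem_tsupport hx')
    have hfar : R / 2 ≤ ‖x - p‖ := by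
      by_contra! hlt
      exact hx ((applyField_congr (hχone x (mem_ball_iff_norm.2 hlt))).trans (applyField_const 1))
    calc (c n).im + 2 * s n ≤ κ * (R / 2) ^ 2 := hn.le
      _ ≤ κ * ‖x - p‖ ^ 2 := by gcongr
      _ ≤ (w x).im := (hball (hχsub hxs)).1
  · obtain ⟨l, hl⟩ := (hball (hχsub (subset_tsupport χ (left_ne_zero_of_mul hx)))).2
      (right_ne_zero_of_mul hx)
    exact hB.le_abs_re_sub n l (fun hln => hxB (hln ▸ hl)) x hl

lemma eventually_re_conj_mul_pos {X : Type*} [TopologicalSpace X] {g : X → ℂ} {p : X}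
    (hg : ContinuousAt g p) (hp : g p ≠ 0) :
    ∀ᶠ x in 𝓝 p, 0 < (starRingEnd ℂ (g p) * g x).re := by
  refine (continuous_re.continuousAt.comp (continuousAt_const.mul hg)).eventually
    (lt_mem_nhds ?_)
  simpa [← normSq_eq_conj_mul_self] using normSq_pos.2 hp

/-- Arbitrarily small perturbations of `a` make `p` a common critical point of all solutions
of class `C¹` defined near `p`. -/
def HasCriticalPerturbation (h : ℕ) (p : ι → ℝ) (a : (ι → ℝ) → ι → ℂ) : Prop :=
  ∀ ε > 0, ∃ V, IsSmall h ε V ∧ ∀ u : (ι → ℝ) → ℂ, ContDiff ℝ 1 u →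
    (∀ᶠ x in 𝓝 p, applyField (a + V) u x = 0) → fderiv ℝ u p = 0

/-- If `∂ᵢu(p) ≠ 0`, then `C u = -J φᵢ ∂ᵢu` has almost constant argument on the pockets
labelled `i`, so its integral over them cannot vanish. -/
lemma partialDeriv_eq_zero_of_pockets (hB : IsSeparatedPockets w p B c s) (hC : ContDiff ℝ 1 C)
    (hdiv : IsDivergenceFree C) (hw : ContDiff ℝ 1 w) (hCw : ∀ x, applyField C w x = 0)
    (hκ : 0 < κ) (hwκ : ∀ᶠ x in 𝓝 p, κ * ‖x - p‖ ^ 2 ≤ (w x).im) (hw0 : (w p).im = 0)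
    {J : (ι → ℝ) → ℂ} (hJ : ContinuousAt J p) (hJ0 : J p ≠ 0) {σ : ℕ → ι} {φ : ι → (ι → ℝ) → ℝ}
    (hφ0 : ∀ i x, 0 ≤ φ i x) (hφ : ∀ i, Function.support (φ i) = ⋃ n ∈ σ ⁻¹' {i}, B n)
    (hu : ContDiff ℝ 1 u)
    (hCu : ∀ᶠ x in 𝓝 p, applyField C u x = -(J x * ∑ j, φ j x * partialDeriv j u x)) {i : ι}
    (hσ : ∃ᶠ n in atTop, σ n = i) : partialDeriv i u p = 0 := by
  have hφB : ∀ j x, φ j x ≠ 0 ↔ ∃ n, σ n = j ∧ x ∈ B n := fun j x => by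
    rw [← Function.mem_support, hφ]
    simp
  by_contra hne
  have hpos := eventually_re_conj_mul_pos (g := fun x => J x * partialDeriv i u x)
    (hJ.mul (contDiff_partialDeriv hu (k := 0) (by norm_num) i).continuous.continuousAt)
    (mul_ne_zero hJ0 hne)
  have hzero := hB.eventually_setIntegral_applyField_eq_zero hC hdiv hw hCw hκ hwκ hw0 hu <| by
    filter_upwards [hCu] with x hx hx0
    obtain ⟨j, -, hj⟩ := Finset.exists_ne_zero_of_sum_ne_zero
      (right_ne_zero_of_mul (neg_ne_zero.1 (hx ▸ hx0)))
    obtain ⟨n, -, hn⟩ := (hφB j x).1 (ofReal_ne_zero.1 (left_ne_zero_of_mul hj))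
    exact ⟨n, hn⟩
  obtain ⟨n, hn, hzero, hBn⟩ := (hσ.and_eventually
    (hzero.and (tendsto_smallSets_iff.1 hB.tendsto _ (hCu.and hpos)))).exists
  have hint : IntegrableOn (applyField C u) (B n) :=
    ((continuous_applyField hC.continuous hu).continuousOn.integrableOn_compact
      hB.isBounded.isCompact_closure).mono_set ((subset_iUnion B n).trans subset_closure)
  refine setIntegral_ne_zero_of_re_mul_pos (hB.isOpen n) (hB.nonempty n) hint
    (z := -starRingEnd ℂ (J p * partialDeriv i u p)) (fun x hx => ?_) hzero
  obtain ⟨hCux, hposx⟩ := hBn hx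
  have hφj : ∀ j, j ≠ i → φ j x = 0 := fun j hj => by
    by_contra hφx
    obtain ⟨l, hl, hxl⟩ := (hφB j x).1 hφx
    exact hj (by rw [← hl, hB.eq_of_mem hx hxl, hn])
  have hφi : 0 < φ i x := (hφ0 i x).lt_of_ne' ((hφB i x).2 ⟨n, hn, hx⟩)
  have hval : -starRingEnd ℂ (J p * partialDeriv i u p) * applyField C u x =
      φ i x * (starRingEnd ℂ (J p * partialDeriv i u p) * (J x * partialDeriv i u x)) := by
    rw [hCux, Finset.sum_eq_single i (fun j _ hj => by simp [hφj j hj]) (by simp)]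
    ring
  rw [hval, re_ofReal_mul]
  exact mul_pos hφi hposx

lemma HasCriticalPerturbation.of_isDivergenceFree (hC : ContDiff ℝ 1 C) (hdiv : IsDivergenceFree C)
    (hw : ContDiff ℝ 1 w) (hCw : ∀ x, applyField C w x = 0) (hκ : 0 < κ)
    (hwκ : ∀ᶠ x in 𝓝 p, κ * ‖x - p‖ ^ 2 ≤ (w x).im) (hw0 : (w p).im = 0) {e : ι → ℝ}
    (he : (fderiv ℝ w p e).re ≠ 0) {J : (ι → ℝ) → ℂ} (hJ : ContinuousAt J p) (hJ0 : J p ≠ 0)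
    (hCJ : ∀ᶠ x in 𝓝 p, C x = J x • a x) (h : ℕ) : HasCriticalPerturbation h p a := by
  intro ε hε
  obtain ⟨B, c, s, hB⟩ := exists_isSeparatedPockets (e := ((fderiv ℝ w p e).re)⁻¹ • e)
    hw.continuous (hw.differentiable one_ne_zero p) (by simp [he])
  have hι : Nonempty ι := by
    by_contra hempty
    have := not_nonempty_iff.1 hempty
    exact he (by simp [Subsingleton.elim e 0])
  obtain ⟨σ, hσ⟩ := exists_frequently_eq ι
  obtain ⟨φ, hφ0, hφ, hsmall⟩ := exists_isSmall_ofReal (S := fun i => ⋃ n ∈ σ ⁻¹' {i}, B n)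
    (fun i => isOpen_biUnion fun n _ => hB.isOpen n)
    (fun i => hB.isBounded.subset (iUnion₂_subset fun n _ => subset_iUnion B n)) h hε
  refine ⟨_, hsmall, fun u hu hsol => fderiv_eq_zero_of_partialDeriv fun i =>
    partialDeriv_eq_zero_of_pockets hB hC hdiv hw hCw hκ hwκ hw0 hJ hJ0 hφ0 hφ hu ?_ (hσ i)⟩
  filter_upwards [hsol, hCJ] with x hx hCx
  have hadd : applyField a u x + ∑ j, φ j x * partialDeriv j u x = 0 := by
    rw [← hx, applyField, applyField, Pi.add_apply, map_add, LinearMap.add_apply]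
    rfl
  rw [applyField, hCx, map_smul, LinearMap.smul_apply, smul_eq_mul, ← mul_neg]
  exact congrArg _ (eq_neg_of_add_eq_zero_left hadd)

end DivergenceFreePerturbation

section Determinant

variable {n : Type*} [Fintype n] [DecidableEq n] {E : Type*} [NormedAddCommGroup E]
  [NormedSpace ℝ E] {M : E → Matrix n n ℂ} {k : ℕ∞ω}

lemma contDiff_matrix_det (hM : ∀ i, ContDiff ℝ k fun x => M x i) :
    ContDiff ℝ k fun x => (M x).det := by
  simp only [Matrix.det_apply']
  exact ContDiff.sum fun σ _ => contDiff_const.mul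
    (contDiff_prod fun i _ => contDiff_pi.1 (hM (σ i)) i)

lemma contDiff_matrix_updateRow {v : E → n → ℂ} (hM : ∀ i, ContDiff ℝ k fun x => M x i)
    (hv : ContDiff ℝ k v) (i j : n) : ContDiff ℝ k fun x => (M x).updateRow i (v x) j := by
  rcases eq_or_ne j i with rfl | hj
  · simpa only [Matrix.updateRow_self] using hv
  · simpa only [Matrix.updateRow_ne hj] using hM j

lemma contDiff_matrix_adjugate (hM : ∀ i, ContDiff ℝ k fun x => M x i) (i : n) :
    ContDiff ℝ k fun x => (M x).adjugate i :=
  contDiff_pi.2 fun j => by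
    simp only [Matrix.adjugate_apply]
    exact contDiff_matrix_det (contDiff_matrix_updateRow hM contDiff_const j)

lemma fderiv_matrix_det_apply {x : E} (hM : ∀ i, DifferentiableAt ℝ (fun y => M y i) x) (v : E) :
    fderiv ℝ (fun y => (M y).det) x v =
      ∑ j, ((M x).updateRow j (fderiv ℝ (fun y => M y j) x v)).det := by
  let detCMM : ContinuousMultilinearMap ℝ (fun _ : n => n → ℂ) ℂ :=
    { toMultilinearMap :=
        (Matrix.detRowAlternating (R := ℂ) (n := n)).toMultilinearMap.restrictScalars ℝ
      cont := continuous_id.matrix_det }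
  have hdet := HasFDerivAt.multilinear_comp detCMM (g := fun j y => M y j)
    fun j => (hM j).hasFDerivAt
  have hderiv : fderiv ℝ (fun y => (M y).det) x = _ := hdet.fderiv
  rw [hderiv, sum_apply]
  rfl

lemma sum_det_updateRow_updateRow_eq_zero {R : Type*} [CommRing R] [IsDomain R] [CharZero R]
    (A : Matrix n n R) {i j : n} (hij : i ≠ j) {H : n → n → R} (hH : ∀ k l, H k l = H l k) :
    ∑ l, ((A.updateRow i (Pi.single l 1)).updateRow j (H l)).det = 0 := by
  let φ : LinearMap.BilinForm R (n → R) := LinearMap.mk₂ R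
    (fun u v => ((A.updateRow i u).updateRow j v).det)
    (fun u u' v => by simp only [A.updateRow_comm hij, Matrix.det_updateRow_add])
    (fun z u v => by simp only [A.updateRow_comm hij, Matrix.det_updateRow_smul, smul_eq_mul])
    (fun u v v' => Matrix.det_updateRow_add _ _ _ _)
    (fun z u v => Matrix.det_updateRow_smul _ _ _ _)
  have hφ : φ.IsAlt := fun u => Matrix.det_zero_of_row_eq hij (by
    rw [Matrix.updateRow_ne hij, Matrix.updateRow_self, Matrix.updateRow_self])
  have hexpand : ∀ l, φ (Pi.single l 1) (H l) =
      ∑ k, H l k * φ (Pi.single l 1) (Pi.single k 1) := fun l => by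
    conv_lhs => rw [pi_eq_sum_univ' (H l)]
    simp only [map_sum, map_smul, smul_eq_mul]
  have hanti : ∑ l, φ (Pi.single l 1) (H l) = -∑ l, φ (Pi.single l 1) (H l) := by
    simp only [hexpand]
    rw [← Finset.sum_neg_distrib, Finset.sum_comm]
    refine Finset.sum_congr rfl fun l _ => ?_
    rw [← Finset.sum_neg_distrib]
    refine Finset.sum_congr rfl fun k _ => ?_
    rw [hH k l, ← hφ.neg_eq (Pi.single l 1), mul_neg]
  exact self_eq_neg.1 hanti

end Determinant

section Cofactor

variable {ι : Type*} [Fintype ι] [DecidableEq ι] {f : (ι → ℝ) → ℂ} {F : ι → (ι → ℝ) → ℂ}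
  {x : ι → ℝ} {k n : ℕ∞ω}

/-- The complex Jacobian matrix of a tuple of functions; the `j`-th row is the differential of
`F j`. -/
noncomputable def jacobian (F : ι → (ι → ℝ) → ℂ) (x : ι → ℝ) : Matrix ι ι ℂ :=
  Matrix.of fun j i => partialDeriv i (F j) x

/-- The vector field whose coefficients are the cofactors of the `i₀`-th row of the Jacobian
matrix; it annihilates every `F j` with `j ≠ i₀`. -/
noncomputable def cofactorField (F : ι → (ι → ℝ) → ℂ) (i₀ : ι) (x : ι → ℝ) (i : ι) : ℂ :=
  (jacobian F x).adjugate i i₀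

lemma contDiff_jacobian (hF : ∀ j, ContDiff ℝ n (F j)) (hk : k + 1 ≤ n) (j : ι) :
    ContDiff ℝ k fun x => jacobian F x j :=
  contDiff_pi.2 fun i => contDiff_partialDeriv (hF j) hk i

lemma contDiff_cofactorField (hF : ∀ j, ContDiff ℝ n (F j)) (hk : k + 1 ≤ n) (i₀ : ι) :
    ContDiff ℝ k (cofactorField F i₀) :=
  contDiff_pi.2 fun i =>
    contDiff_pi.1 (contDiff_matrix_adjugate (contDiff_jacobian hF hk) i) i₀

lemma applyField_eq_jacobian_mulVec (c : (ι → ℝ) → ι → ℂ) (j : ι) :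
    applyField c (F j) x = (jacobian F x).mulVec (c x) j := by
  simp only [applyField_eq_sum, Matrix.mulVec, dotProduct, jacobian, Matrix.of_apply, mul_comm]

lemma applyField_cofactorField_of_ne {i₀ j : ι} (hj : j ≠ i₀) :
    applyField (cofactorField F i₀) (F j) x = 0 := by
  have hmul : (jacobian F x * (jacobian F x).adjugate) j i₀ = 0 := by
    rw [Matrix.mul_adjugate, Matrix.smul_apply, Matrix.one_apply_ne hj, smul_zero]
  rw [applyField_eq_jacobian_mulVec]
  exact hmul

lemma partialDeriv_comm (hf : ContDiff ℝ 2 f) (i j : ι) (x : ι → ℝ) :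
    partialDeriv i (partialDeriv j f) x = partialDeriv j (partialDeriv i f) x := by
  have hsymm : IsSymmSndFDerivAt ℝ f x := hf.contDiffAt.isSymmSndFDerivAt (by simp)
  have hf' : DifferentiableAt ℝ (fderiv ℝ f) x :=
    (hf.fderiv_right (m := 1) (by norm_num)).differentiable one_ne_zero x
  have hsnd : ∀ i j, partialDeriv i (partialDeriv j f) x =
      fderiv ℝ (fderiv ℝ f) x (Pi.single i 1) (Pi.single j 1) := fun i j => by
    have hj := hf'.hasFDerivAt.clm_apply (hasFDerivAt_const (Pi.single j (1 : ℝ)) x)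
    rw [partialDeriv, show fderiv ℝ (partialDeriv j f) x = _ from hj.fderiv]
    simp
  rw [hsnd, hsnd, hsymm]

/-- Piola's identity. -/
lemma isDivergenceFree_cofactorField (hF : ∀ j, ContDiff ℝ 2 (F j)) (i₀ : ι) :
    IsDivergenceFree (cofactorField F i₀) := by
  intro x
  have hjac : ∀ j, ContDiff ℝ 1 fun y => jacobian F y j := contDiff_jacobian hF (by norm_num)
  have hrow : ∀ i j, j ≠ i₀ → fderiv ℝ (fun y => (jacobian F y).updateRow i₀ (Pi.single i 1) j) x
      (Pi.single i 1) = fun l => partialDeriv i (partialDeriv l (F j)) x := fun i j hj => by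
    simp only [Matrix.updateRow_ne hj]
    rw [fderiv_pi fun l => (contDiff_pi.1 (hjac j) l).differentiable one_ne_zero x]
    rfl
  have hdet : ∀ i, partialDeriv i (fun y => cofactorField F i₀ y i) x =
      ∑ j ∈ Finset.univ.erase i₀, (((jacobian F x).updateRow i₀ (Pi.single i 1)).updateRow j
        fun l => partialDeriv i (partialDeriv l (F j)) x).det := fun i => by
    simp only [cofactorField, Matrix.adjugate_apply]
    rw [partialDeriv, fderiv_matrix_det_apply
      (M := fun y => (jacobian F y).updateRow i₀ (Pi.single i 1)) fun j =>
      (contDiff_matrix_updateRow hjac contDiff_const i₀ j).differentiable one_ne_zero x,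
      ← Finset.add_sum_erase _ _ (Finset.mem_univ i₀)]
    simp only [Matrix.updateRow_self, fderiv_fun_const]
    rw [Matrix.det_eq_zero_of_row_eq_zero i₀ fun l => by rw [Matrix.updateRow_self]; rfl, zero_add]
    exact Finset.sum_congr rfl fun j hj => by rw [hrow i j (Finset.ne_of_mem_erase hj)]
  simp only [hdet]
  rw [Finset.sum_comm]
  exact Finset.sum_eq_zero fun j hj => sum_det_updateRow_updateRow_eq_zero
    _ (Finset.ne_of_mem_erase hj).symm fun i l => partialDeriv_comm (hF j) i l x

end Cofactor

section TruncatedExponential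

variable {ι : Type*} [Fintype ι] [DecidableEq ι] {c : (ι → ℝ) → ι → ℂ} {f s : (ι → ℝ) → ℂ}
  {x : ι → ℝ}

/-- The truncation after order `N` of `exp (-s L) f`, where `L` is the vector field with
coefficients `c`. If `L s = 1`, it is a solution of `L w = 0` up to order `N` along `s = 0`. -/
noncomputable def truncExp (c : (ι → ℝ) → ι → ℂ) (s : (ι → ℝ) → ℂ) (N : ℕ) (f : (ι → ℝ) → ℂ)
    (x : ι → ℝ) : ℂ :=
  ∑ n ∈ Finset.range (N + 1), (-s x) ^ n * ((n.factorial : ℂ)⁻¹ * (applyField c)^[n] f x)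

lemma truncExp_zero : truncExp c s 0 f = f :=
  funext fun y => by simp [truncExp]

lemma truncExp_succ (N : ℕ) : truncExp c s (N + 1) f = fun y => truncExp c s N f y +
    (-s y) ^ (N + 1) * (((N + 1).factorial : ℂ)⁻¹ * (applyField c)^[N + 1] f y) :=
  funext fun _ => Finset.sum_range_succ _ _

lemma truncExp_of_eq_zero (hsx : s x = 0) (N : ℕ) : truncExp c s N f x = f x := by
  rw [truncExp, Finset.sum_range_succ', Finset.sum_eq_zero fun n _ => by simp [hsx]]
  simp

lemma contDiff_iterate_applyField (hc : ContDiff ℝ ∞ c) (hf : ContDiff ℝ ∞ f) (n : ℕ) :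
    ContDiff ℝ ∞ ((applyField c)^[n] f) := by
  induction n with
  | zero => exact hf
  | succ n ih =>
    rw [Function.iterate_succ_apply']
    exact contDiff_applyField hc ih (by norm_num)

lemma contDiff_truncExp (hc : ContDiff ℝ ∞ c) (hs : ContDiff ℝ ∞ s) (hf : ContDiff ℝ ∞ f)
    (N : ℕ) : ContDiff ℝ ∞ (truncExp c s N f) :=
  ContDiff.sum fun n _ => (hs.neg.pow n).mul
    (contDiff_const.mul (contDiff_iterate_applyField hc hf n))

lemma applyField_neg_pow (hs : DifferentiableAt ℝ s x) (hcs : applyField c s x = 1) (N : ℕ) :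
    applyField c (fun y => (-s y) ^ (N + 1)) x = -(N + 1) * (-s x) ^ N := by
  have hpow : HasDerivAt (fun z : ℂ => (-z) ^ (N + 1)) (-(N + 1) * (-s x) ^ N) (s x) :=
    ((hasDerivAt_neg (s x)).fun_pow (N + 1)).congr_deriv (by push_cast [Nat.add_sub_cancel]; ring)
  rw [applyField_comp hpow hs, hcs, mul_one]

lemma applyField_truncExp (hc : ContDiff ℝ ∞ c) (hs : ContDiff ℝ ∞ s) (hf : ContDiff ℝ ∞ f)
    (hcs : ∀ x, applyField c s x = 1) (N : ℕ) (x : ι → ℝ) :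
    applyField c (truncExp c s N f) x =
      (-s x) ^ N * ((N.factorial : ℂ)⁻¹ * (applyField c)^[N + 1] f x) := by
  have hds : Differentiable ℝ s := hs.differentiable (by norm_num)
  have hdL : ∀ n, Differentiable ℝ ((applyField c)^[n] f) := fun n =>
    (contDiff_iterate_applyField hc hf n).differentiable (by norm_num)
  induction N with
  | zero => simp [truncExp_zero]
  | succ N ih =>
    have hpow : DifferentiableAt ℝ (fun y => (-s y) ^ (N + 1)) x := (hds.neg.pow _) x
    have hlast := (hdL (N + 1) x).const_mul (((N + 1).factorial : ℂ)⁻¹)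
    have hfact : (N.factorial : ℂ)⁻¹ = (N + 1) * ((N + 1).factorial : ℂ)⁻¹ := by
      rw [Nat.factorial_succ, Nat.cast_mul, mul_inv, ← mul_assoc, Nat.cast_succ,
        mul_inv_cancel₀ N.cast_add_one_ne_zero, one_mul]
    rw [truncExp_succ,
      applyField_add ((contDiff_truncExp hc hs hf N).differentiable (by norm_num) x)
      (hpow.fun_mul hlast), ih, applyField_mul hpow hlast, applyField_neg_pow (hds x) (hcs x),
      applyField_mul (differentiableAt_const _) (hdL _ x), applyField_const,
      Function.iterate_succ_apply' _ (N + 1), hfact]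
    ring

lemma partialDeriv_truncExp (hc : ContDiff ℝ ∞ c) (hs : ContDiff ℝ ∞ s) (hf : ContDiff ℝ ∞ f)
    (N : ℕ) {i : ι} (hsi : ∀ t : ℝ, s (x + t • Pi.single i 1) = 0) :
    partialDeriv i (truncExp c s N f) x = partialDeriv i f x := by
  rw [partialDeriv, partialDeriv,
    ← ((contDiff_truncExp hc hs hf N).differentiable (by norm_num) x).lineDeriv_eq_fderiv,
    ← (hf.differentiable (by norm_num) x).lineDeriv_eq_fderiv, lineDeriv, lineDeriv]
  simp only [truncExp_of_eq_zero (hsi _)]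

omit [DecidableEq ι] in
lemma isBigO_norm_sub (hs : DifferentiableAt ℝ s x) (hsx : s x = 0) :
    s =O[𝓝 x] fun y => ‖y - x‖ := by
  simpa only [hsx, sub_zero] using hs.hasFDerivAt.isBigO_sub.norm_right

lemma pow_mul_iterate_applyField_isLittleO (hc : ContDiff ℝ ∞ c) (hs : ContDiff ℝ ∞ s)
    (hf : ContDiff ℝ ∞ f) (hsx : s x = 0) (hLf : applyField c f x = 0)
    (hdLf : fderiv ℝ (applyField c f) x = 0) (n : ℕ) :
    (fun y => (-s y) ^ n * (applyField c)^[n + 1] f y) =o[𝓝 x] fun y => ‖y - x‖ := by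
  have hL := contDiff_iterate_applyField hc hf
  rcases n with _ | n
  · have hd := ((hL 1).differentiable (by norm_num) x).hasFDerivAt.isLittleO
    simp only [Function.iterate_one, hLf, hdLf, sub_zero, zero_apply] at hd
    simpa only [pow_zero, one_mul, zero_add, Function.iterate_one] using hd.norm_right
  · have hvanish : (-s x) ^ n * (applyField c)^[n + 2] f x = 0 := by
      rcases n with _ | n
      · rw [Function.iterate_succ_apply', applyField, Function.iterate_one, hdLf, map_zero,
          mul_zero]
      · rw [hsx, neg_zero, zero_pow n.succ_ne_zero, zero_mul]
    have hone : (fun y => (-s y) ^ n * (applyField c)^[n + 2] f y) =o[𝓝 x] fun _ => (1 : ℝ) := by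
      refine (Asymptotics.isLittleO_one_iff ℝ).2 (hvanish ▸ ?_)
      exact ((hs.continuous.neg.pow n).mul (hL (n + 2)).continuous).tendsto x
    have hmul :=
      (isBigO_norm_sub (hs.differentiable (by norm_num) x) hsx).neg_left.mul_isLittleO hone
    simpa only [mul_one, ← mul_assoc, ← pow_succ'] using hmul

lemma truncExp_sub_isLittleO (hc : ContDiff ℝ ∞ c) (hs : ContDiff ℝ ∞ s) (hf : ContDiff ℝ ∞ f)
    (N : ℕ) (hsx : s x = 0) (hLf : applyField c f x = 0)
    (hdLf : fderiv ℝ (applyField c f) x = 0) :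
    (fun y => truncExp c s N f y - f y) =o[𝓝 x] fun y => ‖y - x‖ ^ 2 := by
  have hterm : ∀ n, (fun y => (-s y) ^ (n + 1) * (((n + 1).factorial : ℂ)⁻¹ *
      (applyField c)^[n + 1] f y)) =o[𝓝 x] fun y => ‖y - x‖ ^ 2 := fun n => by
    have hmul := (isBigO_norm_sub (hs.differentiable (by norm_num) x) hsx).neg_left.mul_isLittleO
      ((pow_mul_iterate_applyField_isLittleO hc hs hf hsx hLf hdLf n).const_mul_left
        ((n + 1).factorial : ℂ)⁻¹)
    refine hmul.congr (fun y => ?_) fun y => (sq _).symm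
    ring
  refine (Asymptotics.IsLittleO.sum (s := Finset.range N) fun n _ => hterm n).congr_left fun y => ?_
  rw [truncExp, Finset.sum_range_succ']
  simp

end TruncatedExponential

section LinearForms

variable {ι E F : Type*} [NormedAddCommGroup E] [NormedSpace ℝ E] [NormedAddCommGroup F]
  [NormedSpace ℝ F]

/-- The `i`-th coordinate, as a complex-valued linear form on `ℝ^ι`. -/
noncomputable def coordForm (i : ι) : (ι → ℝ) →L[ℝ] ℂ :=
  ofRealCLM.comp (ContinuousLinearMap.proj i)

lemma coordForm_apply (i : ι) (v : ι → ℝ) : coordForm i v = v i := rfl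

lemma contDiff_clm_sub (φ : E →L[ℝ] F) (p : E) : ContDiff ℝ ∞ fun y => φ (y - p) :=
  φ.contDiff.comp (contDiff_id.sub contDiff_const)

lemma fderiv_clm_sub (φ : E →L[ℝ] F) (p x : E) : fderiv ℝ (fun y => φ (y - p)) x = φ :=
  (φ.hasFDerivAt.comp x ((hasFDerivAt_id x).sub_const p)).fderiv

variable [DecidableEq ι]

lemma coordForm_single (i j : ι) : coordForm j (Pi.single i 1) = (Pi.single j 1 : ι → ℂ) i := by
  simp only [coordForm_apply, Pi.single_apply, apply_ite ofReal, ofReal_one, ofReal_zero, eq_comm]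

lemma partialDeriv_clm_sub [Finite ι] {p x : ι → ℝ} (φ : (ι → ℝ) →L[ℝ] ℂ) (i : ι) :
    partialDeriv i (fun y => φ (y - p)) x = φ (Pi.single i 1) := by
  have := Fintype.ofFinite ι
  rw [partialDeriv, fderiv_clm_sub]

variable [Fintype ι] {c : (ι → ℝ) → ι → ℂ} {p x : ι → ℝ}

lemma pairing_coordForm (b : ι → ℂ) (i : ι) : pairing b (coordForm i) = b i := by
  simp [pairing_apply, coordForm_single, Pi.single_apply]

lemma applyField_clm_sub (φ : (ι → ℝ) →L[ℝ] ℂ) :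
    applyField c (fun y => φ (y - p)) x = pairing (c x) φ := by
  rw [applyField, fderiv_clm_sub]

end LinearForms

section ApproximateSolutions

variable {ι : Type*} [Fintype ι] [DecidableEq ι] {c : (ι → ℝ) → ι → ℂ} {p : ι → ℝ} {h N : ℕ}
  {i₀ i₂ : ι} {ε : ℝ} {f F : ι → (ι → ℝ) → ℂ} {W : (ι → ℝ) → ℂ}

lemma det_ne_zero_of_rows {M : Matrix ι ι ℂ} (hi : i₂ ≠ i₀) (h₀ : M i₀ = Pi.single i₀ 1)
    (hid : ∀ j, j ≠ i₀ → j ≠ i₂ → ∀ i, i ≠ i₀ → M j i = (Pi.single j 1 : ι → ℂ) i)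
    (h₂ : M i₂ i₂ ≠ 0) : M.det ≠ 0 := by
  intro hdet
  obtain ⟨v, hv, hMv⟩ := Matrix.exists_mulVec_eq_zero_iff.2 hdet
  have hrow : ∀ j, ∑ i, M j i * v i = 0 := fun j => congrFun hMv j
  have hv₀ : v i₀ = 0 := by
    simpa [h₀, Pi.single_apply] using hrow i₀
  have hvj : ∀ j, j ≠ i₂ → v j = 0 := fun j hj => by
    rcases eq_or_ne j i₀ with rfl | hj₀
    · exact hv₀
    · rw [← hrow j, Finset.sum_eq_single j _ (by simp), hid j hj₀ hj j hj₀, Pi.single_eq_same,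
        one_mul]
      intro i _ hij
      rcases eq_or_ne i i₀ with rfl | hi₀
      · rw [hv₀, mul_zero]
      · rw [hid j hj₀ hj i hi₀, Pi.single_eq_of_ne hij, zero_mul]
  have hv₂ : M i₂ i₂ * v i₂ = 0 := by
    rw [← hrow i₂, Finset.sum_eq_single i₂ (fun i _ hne => by rw [hvj i hne, mul_zero]) (by simp)]
  refine hv (funext fun j => ?_)
  rcases eq_or_ne j i₂ with rfl | hj
  · exact (mul_eq_zero.1 hv₂).resolve_left h₂
  · exact hvj j hj

/-- By Cramer's rule, `det • c` differs from the cofactor field by a multiple of the error. -/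
lemma exists_isSmall_cofactorField_eq (hF : ∀ j, ContDiff ℝ ∞ (F j))
    (hdet : (jacobian F p).det ≠ 0) {R : (ι → ℝ) → ι → ℂ} (hR : ContDiff ℝ ∞ R)
    (hc : ∀ x, (jacobian F x).mulVec (c x) =
      Pi.single i₀ 1 + coordForm i₀ (x - p) ^ (h + 1) • R x) (hε : 0 < ε) :
    ∃ V : (ι → ℝ) → ι → ℂ, IsSmall h ε V ∧
      ∀ᶠ x in 𝓝 p, cofactorField F i₀ x = (jacobian F x).det • (c + V) x := by
  have hjac : ∀ j, ContDiff ℝ ∞ fun x => jacobian F x j := contDiff_jacobian hF (by norm_num)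
  obtain ⟨μ, hμ, hμdet⟩ := exists_contDiff_mul_eq_one (contDiff_matrix_det hjac) hdet
  let G : (ι → ℝ) → ι → ℂ := fun x => -(μ x • (jacobian F x).adjugate.mulVec (R x))
  have hG : ContDiff ℝ ∞ G := (hμ.smul (contDiff_pi.2 fun i => ContDiff.sum fun j _ =>
    (contDiff_pi.1 (contDiff_matrix_adjugate hjac i) j).mul (contDiff_pi.1 hR j))).neg
  let χ : ContDiffBump p := ⟨1, 2, one_pos, one_lt_two⟩
  obtain ⟨V, hV, hVG⟩ := exists_isSmall_eq_pow_smul (f := fun x => χ x • G x) (χ.contDiff.smul hG)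
    χ.hasCompactSupport.smul_right (ContinuousLinearMap.proj (R := ℝ) (φ := fun _ : ι => ℝ) i₀) p
    h hε
  refine ⟨V, hV, ?_⟩
  filter_upwards [hμdet, hVG, χ.eventuallyEq_one] with x hμx hVx hχx
  have hcramer : (jacobian F x).det • c x = cofactorField F i₀ x +
      coordForm i₀ (x - p) ^ (h + 1) • (jacobian F x).adjugate.mulVec (R x) := by
    rw [← Matrix.one_mulVec (c x), ← Matrix.smul_mulVec, ← Matrix.adjugate_mul,
      ← Matrix.mulVec_mulVec, hc, Matrix.mulVec_add, Matrix.mulVec_smul, Matrix.mulVec_single_one]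
    rfl
  have hVx' : V x = coordForm i₀ (x - p) ^ (h + 1) • G x := by
    rw [hVx, hχx, Pi.one_apply, one_smul, coordForm_apply, ← ofReal_pow, coe_smul]
    rfl
  rw [Pi.add_apply, smul_add, hcramer, hVx', smul_comm, smul_neg, smul_smul, mul_comm, hμx,
    one_smul, smul_neg, add_neg_cancel_right]

/-- The functions with initial values `f j` on `x i₀ = p i₀`, continued off this hyperplane as
approximate solutions for the vector field `c`, the one of index `i₀` being replaced by the
coordinate `x i₀ - p i₀`. -/
noncomputable def approxSolutions (c : (ι → ℝ) → ι → ℂ) (p : ι → ℝ) (i₀ : ι) (N : ℕ)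
    (f : ι → (ι → ℝ) → ℂ) : ι → (ι → ℝ) → ℂ :=
  Function.update (fun j => truncExp c (fun x => coordForm i₀ (x - p)) N (f j)) i₀
    fun x => coordForm i₀ (x - p)

lemma approxSolutions_self : approxSolutions c p i₀ N f i₀ = fun x => coordForm i₀ (x - p) :=
  Function.update_self ..

lemma approxSolutions_of_ne {j : ι} (hj : j ≠ i₀) :
    approxSolutions c p i₀ N f j = truncExp c (fun x => coordForm i₀ (x - p)) N (f j) :=
  Function.update_of_ne hj ..

lemma contDiff_approxSolutions (hc : ContDiff ℝ ∞ c) (hf : ∀ j, ContDiff ℝ ∞ (f j)) (j : ι) :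
    ContDiff ℝ ∞ (approxSolutions c p i₀ N f j) := by
  rcases eq_or_ne j i₀ with rfl | hj
  · simpa only [approxSolutions_self] using contDiff_clm_sub _ p
  · simpa only [approxSolutions_of_ne hj] using contDiff_truncExp hc (contDiff_clm_sub _ p) (hf j) N

lemma partialDeriv_approxSolutions_of_ne (hc : ContDiff ℝ ∞ c) (hf : ∀ j, ContDiff ℝ ∞ (f j))
    {i j : ι} (hj : j ≠ i₀) (hi : i ≠ i₀) :
    partialDeriv i (approxSolutions c p i₀ N f j) p = partialDeriv i (f j) p := by
  rw [approxSolutions_of_ne hj]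
  exact partialDeriv_truncExp hc (contDiff_clm_sub _ p) (hf j) N fun t => by
    simp [coordForm_apply, hi.symm]

lemma exists_jacobian_approxSolutions_mulVec_eq (hc : ContDiff ℝ ∞ c) (hc₀ : ∀ x, c x i₀ = 1)
    (hf : ∀ j, ContDiff ℝ ∞ (f j)) : ∃ R : (ι → ℝ) → ι → ℂ, ContDiff ℝ ∞ R ∧
      ∀ x, (jacobian (approxSolutions c p i₀ N f) x).mulVec (c x) =
        Pi.single i₀ 1 + coordForm i₀ (x - p) ^ N • R x := by
  have hcs : ∀ x, applyField c (fun y => coordForm i₀ (y - p)) x = 1 := fun x => by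
    rw [applyField_clm_sub, pairing_coordForm, hc₀]
  refine ⟨fun x => Function.update (fun j =>
    (-1) ^ N * ((N.factorial : ℂ)⁻¹ * (applyField c)^[N + 1] (f j) x)) i₀ 0,
    contDiff_pi.2 fun j => ?_, fun x => funext fun j => ?_⟩
  · rcases eq_or_ne j i₀ with rfl | hj
    · simpa only [Function.update_self] using contDiff_const
    · simpa only [Function.update_of_ne hj] using contDiff_const.mul
        (contDiff_const.mul (contDiff_iterate_applyField hc (hf j) (N + 1)))
  · simp only [← applyField_eq_jacobian_mulVec, Pi.add_apply, Pi.smul_apply]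
    rcases eq_or_ne j i₀ with rfl | hj
    · rw [approxSolutions_self, hcs, Pi.single_eq_same, Function.update_self, smul_zero, add_zero]
    · rw [approxSolutions_of_ne hj, applyField_truncExp hc (contDiff_clm_sub _ p) (hf j) hcs,
        Pi.single_eq_of_ne hj, Function.update_of_ne hj, neg_pow, smul_eq_mul]
      ring

lemma contDiff_update_coordForm (hW : ContDiff ℝ ∞ W) (j : ι) :
    ContDiff ℝ ∞ (Function.update (fun j x => coordForm j (x - p)) i₂ W j) := by
  rcases eq_or_ne j i₂ with rfl | hj
  · simpa only [Function.update_self] using hW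
  · simpa only [Function.update_of_ne hj] using contDiff_clm_sub _ p

lemma det_jacobian_approxSolutions_ne_zero (hc : ContDiff ℝ ∞ c) (hi : i₂ ≠ i₀)
    (hW : ContDiff ℝ ∞ W) (hWi : partialDeriv i₂ W p ≠ 0) :
    (jacobian (approxSolutions c p i₀ N
      (Function.update (fun j x => coordForm j (x - p)) i₂ W)) p).det ≠ 0 := by
  have hf := contDiff_update_coordForm (p := p) (i₂ := i₂) hW
  refine det_ne_zero_of_rows hi (funext fun i => ?_) (fun j hj₀ hj₂ i hi₀ => ?_) ?_
  · rw [jacobian, Matrix.of_apply, approxSolutions_self, partialDeriv_clm_sub, coordForm_single]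
  · rw [jacobian, Matrix.of_apply, partialDeriv_approxSolutions_of_ne hc hf hj₀ hi₀,
      Function.update_of_ne hj₂, partialDeriv_clm_sub, coordForm_single]
  · rwa [jacobian, Matrix.of_apply, partialDeriv_approxSolutions_of_ne hc hf hi hi,
      Function.update_self]

end ApproximateSolutions

section CriticalPerturbation

variable {ι : Type*} [Fintype ι] [DecidableEq ι] {a c : (ι → ℝ) → ι → ℂ} {p : ι → ℝ} {h : ℕ}
  {i₀ i₂ : ι} {κ : ℝ} {W : (ι → ℝ) → ℂ}

namespace HasCriticalPerturbation

lemma of_isSmall (H : ∀ ε > 0, ∃ V, IsSmall h ε V ∧ HasCriticalPerturbation h p (a + V)) :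
    HasCriticalPerturbation h p a := by
  intro ε hε
  obtain ⟨V, hV, hVa⟩ := H (ε / 2) (half_pos hε)
  obtain ⟨V', hV', hcrit⟩ := hVa (ε / 2) (half_pos hε)
  refine ⟨V + V', add_halves ε ▸ hV.add hV', fun u hu hsol => hcrit u hu ?_⟩
  simpa only [add_assoc] using hsol

lemma of_smul {ψ : (ι → ℝ) → ℂ} (hψ : ContDiff ℝ ∞ ψ) (hψp : ψ p ≠ 0)
    (ha : ∀ᶠ x in 𝓝 p, a x = ψ x • c x) (hc : HasCriticalPerturbation h p c) :
    HasCriticalPerturbation h p a := by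
  intro ε hε
  let χ : ContDiffBump p := ⟨1, 2, one_pos, one_lt_two⟩
  obtain ⟨K, hK⟩ := exists_isSmall (χ.contDiff.smul hψ) (χ.hasCompactSupport.smul_right) h
  have hK0 := hK.pos
  obtain ⟨V, hV, hcrit⟩ := hc (ε / (2 ^ h * K)) (by positivity)
  refine ⟨fun x => (χ x • ψ x) • V x, (hK.smul hV).mono (mul_div_cancel₀ ε (by positivity)).le,
    fun u hu hsol => hcrit u hu ?_⟩
  filter_upwards [hsol, ha, χ.eventuallyEq_one, hψ.continuous.continuousAt.eventually_ne hψp]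
    with x hx hax hχx hψx
  have hscale : (a + fun x => (χ x • ψ x) • V x) x = ψ x • (c + V) x := by
    simp only [Pi.add_apply, hax, hχx, Pi.one_apply, one_smul, smul_add]
  have hprod : ψ x * applyField (c + V) u x = 0 := by
    rw [← hx, applyField, applyField, hscale, map_smul, LinearMap.smul_apply, smul_eq_mul]
  exact (mul_eq_zero.1 hprod).resolve_left hψx

lemma of_approxSolution (hc : ContDiff ℝ ∞ c) (hc₀ : ∀ x, c x i₀ = 1) (hi : i₂ ≠ i₀)
    (hW : ContDiff ℝ ∞ W) (hWp : (W p).im = 0) (hLW : applyField c W p = 0)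
    (hdLW : fderiv ℝ (applyField c W) p = 0) (hWi : (partialDeriv i₂ W p).re ≠ 0)
    (hκ : 0 < κ) (hWκ : ∀ x, κ * ‖x - p‖ ^ 2 ≤ (W x).im) (h : ℕ) :
    HasCriticalPerturbation h p c := by
  set f := Function.update (fun j x => coordForm j (x - p)) i₂ W
  set F := approxSolutions c p i₀ (h + 1) f
  have hf : ∀ j, ContDiff ℝ ∞ (f j) := contDiff_update_coordForm hW
  have hF : ∀ j, ContDiff ℝ ∞ (F j) := contDiff_approxSolutions hc hf
  have hw : F i₂ = truncExp c (fun x => coordForm i₀ (x - p)) (h + 1) W := by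
    simp only [F, f, approxSolutions_of_ne hi, Function.update_self]
  have hclose := truncExp_sub_isLittleO hc (contDiff_clm_sub (coordForm i₀) p) hW (h + 1)
    (by simp) hLW hdLW
  have hdet : (jacobian F p).det ≠ 0 := det_jacobian_approxSolutions_ne_zero hc hi hW
    fun hzero => hWi (by rw [hzero, zero_re])
  have hwκ : ∀ᶠ x in 𝓝 p, κ / 2 * ‖x - p‖ ^ 2 ≤ (F i₂ x).im := by
    filter_upwards [hclose.def (half_pos hκ)] with x hx
    have hdist := (abs_im_le_norm _).trans hx
    rw [Real.norm_of_nonneg (by positivity), abs_le, sub_im] at hdist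
    rw [hw]
    linarith [hdist.1, hWκ x]
  have hwp : (F i₂ p).im = 0 := by rw [hw, truncExp_of_eq_zero (by simp), hWp]
  have hwi : (partialDeriv i₂ (F i₂) p).re ≠ 0 := by
    rwa [partialDeriv_approxSolutions_of_ne hc hf hi hi, show f i₂ = W from Function.update_self ..]
  obtain ⟨R, hR, hFR⟩ := exists_jacobian_approxSolutions_mulVec_eq (p := p) (N := h + 1) hc hc₀ hf
  refine of_isSmall fun ε hε => ?_
  obtain ⟨V, hV, hCV⟩ := exists_isSmall_cofactorField_eq hF hdet hR hFR hε
  exact ⟨V, hV, of_isDivergenceFree (J := fun x => (jacobian F x).det)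
    ((contDiff_cofactorField hF (k := ∞) (by norm_num) i₀).of_le (by norm_num))
    (isDivergenceFree_cofactorField (fun j => contDiff_infty.1 (hF j) 2) i₀)
    ((hF i₂).of_le (by norm_num)) (fun x => applyField_cofactorField_of_ne hi)
    (half_pos hκ) hwκ hwp hwi
    (contDiff_matrix_det (contDiff_jacobian hF (k := 0) (by norm_num))).continuous.continuousAt
    hdet hCV h⟩

end HasCriticalPerturbation

end CriticalPerturbation

section SecondOrderJets

lemma exists_pos_mul_norm_sq_le {E : Type*} [NormedAddCommGroup E] [NormedSpace ℝ E]
    [FiniteDimensional ℝ E] {q : E → ℝ} (hq : Continuous q) (hsmul : ∀ (t : ℝ) v,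
    q (t • v) = t ^ 2 * q v) (hpos : ∀ v ≠ 0, 0 < q v) : ∃ κ > 0, ∀ v, κ * ‖v‖ ^ 2 ≤ q v := by
  have hproper := FiniteDimensional.proper_real E
  obtain ⟨κ, hκ, hκq⟩ := (isCompact_sphere (0 : E) 1).exists_forall_le' hq.continuousOn
    fun v hv => hpos v (ne_zero_of_mem_unit_sphere ⟨v, hv⟩)
  refine ⟨κ, hκ, fun v => ?_⟩
  rcases eq_or_ne v 0 with rfl | hv
  · simpa using (hsmul 0 (0 : E)).ge
  · have hunit : κ ≤ q (‖v‖⁻¹ • v) := hκq _ (by simp [norm_smul, hv])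
    rwa [hsmul, inv_pow, ← div_eq_inv_mul, le_div_iff₀ (by positivity)] at hunit

lemma sq_norm_le_sum_sq {ι : Type*} [Fintype ι] (v : ι → ℝ) : ‖v‖ ^ 2 ≤ ∑ j, v j ^ 2 :=
  (Real.le_sqrt (norm_nonneg _) (by positivity)).1 <|
    (pi_norm_le_iff_of_nonneg (Real.sqrt_nonneg _)).2 fun j =>
      Real.abs_le_sqrt (Finset.single_le_sum (fun _ _ => sq_nonneg _) (Finset.mem_univ j))

section Bilinear

variable {E : Type*} [NormedAddCommGroup E] [NormedSpace ℝ E]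

lemma contDiff_bilinear_sub (B : E →L[ℝ] E →L[ℝ] ℂ) (p : E) :
    ContDiff ℝ ∞ fun y => B (y - p) (y - p) :=
  (contDiff_clm_sub B p).clm_apply (contDiff_id.sub contDiff_const)

lemma fderiv_bilinear_sub (B : E →L[ℝ] E →L[ℝ] ℂ) (p x : E) :
    fderiv ℝ (fun y => B (y - p) (y - p)) x = (B + B.flip) (x - p) := by
  have hsub : HasFDerivAt (fun y => y - p) (ContinuousLinearMap.id ℝ E) x :=
    (hasFDerivAt_id x).sub_const p
  rw [(B.hasFDerivAt_of_bilinear hsub hsub).fderiv]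
  rfl

/-- The bilinear form `(v, w) ↦ φ v * χ w`. -/
noncomputable def formMul (φ χ : E →L[ℝ] ℂ) : E →L[ℝ] E →L[ℝ] ℂ :=
  (ContinuousLinearMap.mul ℝ ℂ).bilinearComp φ χ

lemma formMul_apply (φ χ : E →L[ℝ] ℂ) (v w : E) : formMul φ χ v w = φ v * χ w := rfl

/-- The complex conjugate of a complex-valued real-linear form. -/
noncomputable def conjForm (φ : E →L[ℝ] ℂ) : E →L[ℝ] ℂ :=
  (conjCLE : ℂ →L[ℝ] ℂ).comp φ

lemma conjForm_apply (φ : E →L[ℝ] ℂ) (v : E) : conjForm φ v = starRingEnd ℂ (φ v) := rfl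

end Bilinear

variable {ι : Type*} {b : ι → ℂ} {z : (ι → ℝ) →L[ℝ] ℂ}

/-- The endomorphism `v ↦ v - (re (z v)) • re b - (im (z v)) • im b` of `ℝ^ι`. When `z` pairs to `0`
with `b` and to `2` with the conjugate of `b`, it is the projection onto the kernel of `z` along the
span of the real and imaginary parts of `b`. -/
noncomputable def transversalProj (b : ι → ℂ) (z : (ι → ℝ) →L[ℝ] ℂ) : (ι → ℝ) →L[ℝ] ι → ℝ :=
  ContinuousLinearMap.id ℝ _ - (reCLM.comp z).smulRight (fun i => (b i).re) -
    (imCLM.comp z).smulRight (fun i => (b i).im)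

lemma transversalProj_apply (v : ι → ℝ) : transversalProj b z v =
    v - (z v).re • (fun i => (b i).re) - (z v).im • (fun i => (b i).im) := rfl

lemma transversalProj_of_eq_zero {v : ι → ℝ} (hv : z v = 0) : transversalProj b z v = v := by
  simp [transversalProj_apply, hv]

lemma eq_zero_of_transversalProj_eq_zero {v : ι → ℝ} (hY : transversalProj b z v = 0)
    (hv : z v = 0) : v = 0 :=
  (transversalProj_of_eq_zero hv).symm.trans hY

variable [Fintype ι] [DecidableEq ι] {c : (ι → ℝ) → ι → ℂ} {p : ι → ℝ} {l : (ι → ℝ) →L[ℝ] ℂ}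
  {τ : ℝ}

lemma applyField_bilinear_sub (B : (ι → ℝ) →L[ℝ] (ι → ℝ) →L[ℝ] ℂ) (x : ι → ℝ) :
    applyField c (fun y => B (y - p) (y - p)) x = pairing (c x) ((B + B.flip) (x - p)) := by
  rw [applyField, fderiv_bilinear_sub]

lemma fderiv_applyField_bilinear_sub (hc : DifferentiableAt ℝ c p)
    (B : (ι → ℝ) →L[ℝ] (ι → ℝ) →L[ℝ] ℂ) (v : ι → ℝ) :
    fderiv ℝ (applyField c fun y => B (y - p) (y - p)) p v = pairing (c p) ((B + B.flip) v) := by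
  set D := B + B.flip
  have hci : ∀ i, DifferentiableAt ℝ (fun x => c x i) p := differentiableAt_pi.1 hc
  have hD : ∀ i, HasFDerivAt (fun x => D (x - p) (Pi.single i 1)) (D.flip (Pi.single i 1)) p :=
    fun i => (D.flip (Pi.single i 1)).hasFDerivAt.comp p ((hasFDerivAt_id p).sub_const p)
  have hsum : (applyField c fun y => B (y - p) (y - p)) =
      fun x => ∑ i, c x i * D (x - p) (Pi.single i 1) :=
    funext (applyField_bilinear_sub B)
  have hderiv := HasFDerivAt.fun_sum (u := Finset.univ) fun i _ =>
    (hci i).hasFDerivAt.fun_mul (hD i)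
  rw [hsum, hderiv.fderiv, pairing_apply]
  simp

lemma pairing_eq_re_add_im (b : ι → ℂ) (φ : (ι → ℝ) →L[ℝ] ℂ) :
    pairing b φ = φ (fun i => (b i).re) + I * φ (fun i => (b i).im) := by
  have hφ : ∀ v : ι → ℝ, φ v = ∑ i, (v i : ℂ) * φ (Pi.single i 1) := fun v => by
    conv_lhs => rw [pi_eq_sum_univ' v]
    simp only [map_sum, map_smul, real_smul]
  rw [hφ fun i => (b i).re, hφ fun i => (b i).im, Finset.mul_sum, ← Finset.sum_add_distrib,
    pairing_apply]
  refine Finset.sum_congr rfl fun i _ => ?_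
  conv_lhs => rw [← re_add_im (b i)]
  ring

lemma pairing_star_eq_re_sub_im (b : ι → ℂ) (φ : (ι → ℝ) →L[ℝ] ℂ) :
    pairing (star b) φ = φ (fun i => (b i).re) - I * φ (fun i => (b i).im) := by
  have hneg : (fun i => (star b i).im) = -fun i => (b i).im := funext fun i => conj_im (b i)
  rw [pairing_eq_re_add_im, hneg, map_neg, mul_neg, ← sub_eq_add_neg]
  rfl

lemma eq_comp_transversalProj_add (b : ι → ℂ) (φ z : (ι → ℝ) →L[ℝ] ℂ) :
    φ = φ.comp (transversalProj b z) + (pairing (star b) φ / 2) • z +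
      (pairing b φ / 2) • conjForm z := by
  ext v
  have hv : φ v = φ (transversalProj b z v) + (z v).re * φ (fun i => (b i).re) +
      (z v).im * φ (fun i => (b i).im) := by
    rw [transversalProj_apply, map_sub, map_sub, map_smul, map_smul, real_smul, real_smul]
    ring
  have hconj : conjForm z v = (z v).re - (z v).im * I := by
    rw [conjForm_apply, ← re_add_im (starRingEnd ℂ (z v)), conj_re, conj_im, ofReal_neg]
    ring
  simp only [_root_.add_apply, FunLike.coe_smul, Pi.smul_apply, smul_eq_mul,
    ContinuousLinearMap.comp_apply, pairing_star_eq_re_sub_im, pairing_eq_re_add_im b, hconj]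
  set P : ι → ℝ := fun i => (b i).re
  set Q : ι → ℝ := fun i => (b i).im
  linear_combination hv + (φ P - I * φ Q) / 2 * re_add_im (z v) + (z v).im * φ Q * I_sq

lemma pairing_comp_transversalProj (hz : pairing b z = 0) (hz' : pairing b (conjForm z) = 2)
    (φ : (ι → ℝ) →L[ℝ] ℂ) : pairing b (φ.comp (transversalProj b z)) = 0 := by
  have hpair := congrArg (pairing b) (eq_comp_transversalProj_add b φ z)
  simp only [map_add, map_smul, hz, hz', smul_eq_mul] at hpair
  linear_combination -hpair

/-- A quadratic form `B` such that the field with constant coefficients `b` maps `B v v` to `-l v`,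
for a form `z` which pairs to `0` with `b` and to `2` with the conjugate of `b`. The last summand
makes the imaginary part large in the directions transversal to `b`. -/
noncomputable def quadraticCorrection (b : ι → ℂ) (z l : (ι → ℝ) →L[ℝ] ℂ) (τ : ℝ) :
    (ι → ℝ) →L[ℝ] (ι → ℝ) →L[ℝ] ℂ :=
  formMul (-(1 / 2 : ℂ) • l.comp (transversalProj b z) - (pairing (star b) l / 4) • z -
    (pairing b l / 8) • conjForm z) (conjForm z) -
  formMul ((starRingEnd ℂ (pairing b l) / 8) • z) z +
  ∑ j, formMul ((τ * I) • (coordForm j).comp (transversalProj b z))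
    ((coordForm j).comp (transversalProj b z))

lemma quadraticCorrection_apply (v w : ι → ℝ) : quadraticCorrection b z l τ v w =
    (-(1 / 2) * l (transversalProj b z v) - pairing (star b) l / 4 * z v -
      pairing b l / 8 * conjForm z v) * conjForm z w - starRingEnd ℂ (pairing b l) / 8 * z v * z w +
      ∑ j, τ * I * transversalProj b z v j * transversalProj b z w j := by
  simp [quadraticCorrection, formMul_apply, coordForm_apply]

lemma pairing_quadraticCorrection_add_flip (hz : pairing b z = 0)
    (hz' : pairing b (conjForm z) = 2) (l : (ι → ℝ) →L[ℝ] ℂ) (τ : ℝ) (v : ι → ℝ) :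
    pairing b ((quadraticCorrection b z l τ + (quadraticCorrection b z l τ).flip) v) = -l v := by
  set Y := transversalProj b z
  set φ : (ι → ℝ) →L[ℝ] ℂ := -(1 / 2 : ℂ) • l.comp Y - (pairing (star b) l / 4) • z -
    (pairing b l / 8) • conjForm z
  have hY : ∀ χ : (ι → ℝ) →L[ℝ] ℂ, pairing b (χ.comp Y) = 0 := pairing_comp_transversalProj hz hz'
  have hφ : pairing b φ = -pairing b l / 4 := by
    simp only [φ, map_sub, map_smul, hY, hz, hz', smul_eq_mul]
    ring
  have happly : (quadraticCorrection b z l τ + (quadraticCorrection b z l τ).flip) v =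
      φ v • conjForm z + conjForm z v • φ - (starRingEnd ℂ (pairing b l) / 4 * z v) • z +
        ∑ j, (2 * (τ * I * Y v j)) • (coordForm j).comp Y := by
    ext w
    have hsum : ∑ j, 2 * (τ * I * Y v j) * Y w j =
        ∑ j, τ * I * Y v j * Y w j + ∑ j, τ * I * Y w j * Y v j := by
      rw [← Finset.sum_add_distrib]
      exact Finset.sum_congr rfl fun j _ => by ring
    simp only [_root_.add_apply, _root_.sub_apply, _root_.sum_apply, smul_apply, smul_eq_mul,
      ContinuousLinearMap.flip_apply, ContinuousLinearMap.comp_apply, coordForm_apply,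
      quadraticCorrection_apply, hsum, φ]
    ring
  have hl : l v = l (Y v) + pairing (star b) l / 2 * z v + pairing b l / 2 * conjForm z v :=
    congrArg (· v) (eq_comp_transversalProj_add b l z)
  rw [happly]
  simp only [map_add, map_sub, map_smul, map_sum, hφ, hY, hz, hz', smul_eq_mul, mul_zero,
    Finset.sum_const_zero, φ, _root_.sub_apply, smul_apply, ContinuousLinearMap.comp_apply]
  linear_combination hl

lemma quadraticCorrection_apply_im (v : ι → ℝ) :
    (quadraticCorrection b z l τ v v).im =
      -(l (transversalProj b z v) * conjForm z v).im / 2 - (pairing (star b) l).im / 4 * ‖z v‖ ^ 2 +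
        τ * ∑ j, transversalProj b z v j ^ 2 := by
  set Y := transversalProj b z v
  have hsum : ∑ j, τ * I * Y j * Y j = ((τ * ∑ j, Y j ^ 2 : ℝ) : ℂ) * I := by
    push_cast
    rw [Finset.mul_sum, Finset.sum_mul]
    exact Finset.sum_congr rfl fun j _ => by ring
  have hnorm : z v * conjForm z v = ((‖z v‖ ^ 2 : ℝ) : ℂ) := by
    rw [conjForm_apply, mul_conj', ofReal_pow]
  have hreal : (pairing b l / 8 * conjForm z v * conjForm z v +
      starRingEnd ℂ (pairing b l) / 8 * z v * z v).im = 0 := by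
    simp [conjForm_apply]
    ring
  have hsplit : quadraticCorrection b z l τ v v = ((-(1 / 2) : ℝ) : ℂ) * (l Y * conjForm z v) -
      ((‖z v‖ ^ 2 / 4 : ℝ) : ℂ) * pairing (star b) l -
      (pairing b l / 8 * conjForm z v * conjForm z v +
        starRingEnd ℂ (pairing b l) / 8 * z v * z v) + ((τ * ∑ j, Y j ^ 2 : ℝ) : ℂ) * I := by
    rw [quadraticCorrection_apply, hsum]
    push_cast at hnorm ⊢
    linear_combination -(pairing (star b) l / 4) * hnorm
  rw [hsplit, add_im, sub_im, sub_im, hreal, im_ofReal_mul, im_ofReal_mul, im_ofReal_mul, I_im]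
  ring

lemma exists_quadraticCorrection_im_ge (b : ι → ℂ) (z : (ι → ℝ) →L[ℝ] ℂ)
    (hl : (pairing (star b) l).im < 0) :
    ∃ τ, ∃ κ > 0, ∀ v, κ * ‖v‖ ^ 2 ≤ (quadraticCorrection b z l τ v v).im := by
  set a := -(pairing (star b) l).im / 4
  have ha : 0 < a := by simp only [a]; linarith
  set τ := ‖l‖ ^ 2 / (16 * a) + 1
  have hτ : 0 ≤ τ := by positivity
  have hcont : Continuous fun v => (quadraticCorrection b z l τ v v).im :=
    continuous_im.comp ((quadraticCorrection b z l τ).continuous.clm_apply continuous_id)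
  refine ⟨τ, exists_pos_mul_norm_sq_le hcont (fun t v => ?_) fun v hv => ?_⟩
  · simp [pow_two, mul_assoc]
  set y := ‖transversalProj b z v‖
  have hcross : (l (transversalProj b z v) * conjForm z v).im ≤ ‖l‖ * y * ‖z v‖ := by
    refine (im_le_norm _).trans ?_
    rw [norm_mul, conjForm_apply, norm_conj]
    gcongr
    exact l.le_opNorm _
  have hsquare : a * ‖z v‖ ^ 2 - ‖l‖ * y * ‖z v‖ / 2 + τ * y ^ 2 =
      a * (‖z v‖ - ‖l‖ * y / (4 * a)) ^ 2 + y ^ 2 := by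
    simp only [τ]
    field_simp
    ring
  have hpos : 0 < a * (‖z v‖ - ‖l‖ * y / (4 * a)) ^ 2 + y ^ 2 := by
    rcases eq_or_ne y 0 with hy | hy
    · have hzv : z v ≠ 0 := fun h => hv (eq_zero_of_transversalProj_eq_zero (norm_eq_zero.1 hy) h)
      rw [hy, mul_zero, zero_div, sub_zero]
      positivity
    · positivity
  rw [quadraticCorrection_apply_im]
  have := mul_le_mul_of_nonneg_left (sq_norm_le_sum_sq (transversalProj b z v)) hτ
  have haz : -(pairing (star b) l).im / 4 * ‖z v‖ ^ 2 = a * ‖z v‖ ^ 2 := rfl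
  linarith

end SecondOrderJets

section Perturbation

variable {ι : Type*} [Fintype ι] [DecidableEq ι] {a c : (ι → ℝ) → ι → ℂ} {p : ι → ℝ}
  {i₀ i₁ i₂ : ι} {f z : (ι → ℝ) →L[ℝ] ℂ}

lemma pairing_single (i : ι) (ζ : ℂ) (φ : (ι → ℝ) →L[ℝ] ℂ) :
    pairing (Pi.single i ζ) φ = ζ * φ (Pi.single i 1) := by
  simp [pairing_apply, Pi.single_apply]

lemma contDiff_pairing {n : ℕ∞ω} (hc : ContDiff ℝ n c) (φ : (ι → ℝ) →L[ℝ] ℂ) :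
    ContDiff ℝ n fun x => pairing (c x) φ :=
  ContDiff.sum fun i _ => (contDiff_pi.1 hc i).mul contDiff_const

lemma exists_pairing_conjForm_eq_two {b : ι → ℂ} (hb : b i₀ = 1) (him : (b i₁).im ≠ 0) :
    ∃ z : (ι → ℝ) →L[ℝ] ℂ, pairing b z = 0 ∧ pairing b (conjForm z) = 2 ∧
      ∀ i, i ≠ i₀ → i ≠ i₁ → z (Pi.single i 1) = 0 := by
  set z : (ι → ℝ) →L[ℝ] ℂ := (I / (b i₁).im) • (coordForm i₁ - b i₁ • coordForm i₀)
  have hconj : conjForm z =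
      (-(I / (b i₁).im)) • (coordForm i₁ - starRingEnd ℂ (b i₁) • coordForm i₀) := by
    ext v
    simp [z, conjForm_apply, coordForm_apply, neg_div]
  have him' : ((b i₁).im : ℂ) ≠ 0 := ofReal_ne_zero.2 him
  refine ⟨z, ?_, ?_, fun i hi₀ hi₁ => ?_⟩
  · simp [z, pairing_coordForm, hb]
  · rw [hconj, map_smul, map_sub, map_smul, pairing_coordForm, pairing_coordForm, hb, smul_eq_mul,
      smul_eq_mul, mul_one, sub_conj, ofReal_mul, ofReal_ofNat]
    field_simp
    rw [I_sq]
    ring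
  · simp [z, coordForm_single, hi₀, hi₁]

namespace HasCriticalPerturbation

lemma of_im_pairing_neg (hc : ContDiff ℝ ∞ c) (hc₀ : ∀ x, c x i₀ = 1) (hi : i₂ ≠ i₀)
    (hz : pairing (c p) z = 0) (hz' : pairing (c p) (conjForm z) = 2) (hf : pairing (c p) f = 0)
    (hf_real : ∀ v, (f v).im = 0) (hfi : (f (Pi.single i₂ 1)).re ≠ 0)
    (hneg : (pairing (star (c p)) (fderiv ℝ (fun x => pairing (c x) f) p)).im < 0) (h : ℕ) :
    HasCriticalPerturbation h p c := by
  set l := fderiv ℝ (fun x => pairing (c x) f) p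
  obtain ⟨τ, κ, hκ, hκB⟩ := exists_quadraticCorrection_im_ge (c p) z hneg
  set B := quadraticCorrection (c p) z l τ
  set W : (ι → ℝ) → ℂ := fun x => f (x - p) + B (x - p) (x - p)
  have hfs : ContDiff ℝ ∞ fun x => f (x - p) := contDiff_clm_sub f p
  have hBs : ContDiff ℝ ∞ fun x => B (x - p) (x - p) := contDiff_bilinear_sub B p
  have hdf : Differentiable ℝ fun x => f (x - p) := hfs.differentiable (by norm_num)
  have hdB : Differentiable ℝ fun x => B (x - p) (x - p) := hBs.differentiable (by norm_num)
  have hLW : applyField c W =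
      fun x => pairing (c x) f + applyField c (fun y => B (y - p) (y - p)) x := funext fun x => by
    rw [applyField_add (hdf x) (hdB x), applyField_clm_sub]
  have hdLW : fderiv ℝ (applyField c W) p = 0 := by
    ext v
    rw [hLW, fderiv_fun_add ((contDiff_pairing hc f).differentiable (by norm_num) p)
      ((contDiff_applyField hc hBs (k := ∞) (by norm_num)).differentiable (by norm_num) p),
      _root_.add_apply, fderiv_applyField_bilinear_sub (hc.differentiable (by norm_num) p),
      pairing_quadraticCorrection_add_flip hz hz', add_neg_cancel, zero_apply]
  have hWp : (W p).im = 0 := by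
    simp only [W, sub_self, map_zero, add_zero, zero_im]
  have hLWp : applyField c W p = 0 := by
    simp only [hLW, hf, applyField_bilinear_sub, sub_self, map_zero, add_zero]
  refine of_approxSolution hc hc₀ hi (hfs.add hBs) hWp hLWp hdLW ?_ hκ (fun x => ?_) h
  · rwa [partialDeriv, fderiv_fun_add (hdf p) (hdB p), fderiv_bilinear_sub, fderiv_clm_sub,
      sub_self, map_zero, add_zero]
  · rw [add_im, hf_real, zero_add]
    exact hκB (x - p)

lemma of_im_pairing_ne (hc : ContDiff ℝ ∞ c) (hc₀ : ∀ x, c x i₀ = 1) (hi : i₂ ≠ i₀)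
    (hz : pairing (c p) z = 0) (hz' : pairing (c p) (conjForm z) = 2) (hf : pairing (c p) f = 0)
    (hf_real : ∀ v, (f v).im = 0) (hfi : (f (Pi.single i₂ 1)).re ≠ 0)
    (hne : (pairing (star (c p)) (fderiv ℝ (fun x => pairing (c x) f) p)).im ≠ 0) (h : ℕ) :
    HasCriticalPerturbation h p c := by
  rcases hne.lt_or_gt with hneg | hpos
  · exact of_im_pairing_neg hc hc₀ hi hz hz' hf hf_real hfi hneg h
  · refine of_im_pairing_neg (f := -f) hc hc₀ hi hz hz' ?_ (fun v => ?_) ?_ ?_ h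
    · rw [map_neg, hf, neg_zero]
    · rw [neg_apply, neg_im, hf_real, neg_zero]
    · rwa [neg_apply, neg_re, neg_ne_zero]
    · simpa only [map_neg, fderiv_fun_neg, neg_im, neg_lt_zero] using hpos

lemma of_forall_coord_add {g : (ι → ℝ) → ℂ} (ha : ContDiff ℝ ∞ a) (hg : ContDiff ℝ ∞ g) (i : ι)
    (A : ℝ) (H : ∀ (η : ℝ) (c : (ι → ℝ) → ι → ℂ), A + η ≠ 0 → ContDiff ℝ ∞ c →
      (∀ x, ∀ j ≠ i, c x j = a x j) → (∀ᶠ x in 𝓝 p, c x = a x + Pi.single i (η * g x)) →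
      HasCriticalPerturbation h p c) : HasCriticalPerturbation h p a := by
  refine of_isSmall fun ε hε => ?_
  let χ : ContDiffBump p := ⟨1, 2, one_pos, one_lt_two⟩
  have hgi : ContDiff ℝ ∞ fun x => χ x • (Pi.single i (g x) : ι → ℂ) :=
    χ.contDiff.smul ((ContinuousLinearMap.single ℝ (fun _ : ι => ℂ) i).contDiff.comp hg)
  obtain ⟨η, hη, hsmall⟩ :=
    exists_isSmall_smul_add_ne_zero hgi χ.hasCompactSupport.smul_right h hε A
  refine ⟨_, hsmall, H η _ hη (ha.add hsmall.contDiff) (fun x j hj => ?_) ?_⟩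
  · simp [hj]
  · filter_upwards [χ.eventuallyEq_one] with x hx
    simp [hx, ← Pi.single_smul]

lemma of_im_coord_ne_zero (hc : ContDiff ℝ ∞ c) (hc₀ : ∀ x, c x i₀ = 1) (h₂₀ : i₂ ≠ i₀)
    (h₂₁ : i₂ ≠ i₁) (him : (c p i₁).im ≠ 0) (h : ℕ) : HasCriticalPerturbation h p c := by
  set b := c p
  obtain ⟨z, hz, hz', hz_single⟩ := exists_pairing_conjForm_eq_two (b := b) (hc₀ p) him
  set f := (coordForm i₂).comp (transversalProj b z)
  have hf : pairing b f = 0 := pairing_comp_transversalProj hz hz' _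
  have hfi : f (Pi.single i₂ 1) = 1 := by
    rw [ContinuousLinearMap.comp_apply, transversalProj_of_eq_zero (hz_single i₂ h₂₀ h₂₁),
      coordForm_single, Pi.single_eq_same]
  set l := fderiv ℝ (fun x => pairing (c x) f) p
  refine of_forall_coord_add (g := fun x => I * coordForm i₀ (x - p)) hc
    (contDiff_const.mul (contDiff_clm_sub _ p)) i₂ (pairing (star b) l).im
    fun η c' hη hc' hcj hcp => ?_
  have hc'p : c' p = b := by
    simpa using hcp.self_of_nhds
  have hl : fderiv ℝ (fun x => pairing (c' x) f) p = l + (η * I) • coordForm i₀ := by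
    have hpair : (fun x => pairing (c' x) f) =ᶠ[𝓝 p]
        fun x => pairing (c x) f + ((η * I) • coordForm i₀) (x - p) := by
      filter_upwards [hcp] with x hx
      rw [hx, map_add, LinearMap.add_apply, pairing_single, hfi, mul_one, smul_apply, smul_eq_mul,
        mul_assoc]
    rw [hpair.fderiv_eq, fderiv_fun_add ((contDiff_pairing hc f).differentiable (by norm_num) p)
      ((contDiff_clm_sub _ p).differentiable (by norm_num) p), fderiv_clm_sub]
  refine of_im_pairing_ne (i₀ := i₀) (i₂ := i₂) (z := z) (f := f) hc'
    (fun x => (hcj x i₀ h₂₀.symm).trans (hc₀ x)) h₂₀ (hc'p ▸ hz) (hc'p ▸ hz') (hc'p ▸ hf)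
    (fun v => ofReal_im _) ?_ ?_ h
  · rw [hfi, one_re]
    exact one_ne_zero
  · rw [hc'p, hl, map_add, map_smul, pairing_coordForm]
    simpa [b, hc₀] using hη

lemma of_coord_eq_one (hc : ContDiff ℝ ∞ c) (hc₀ : ∀ x, c x i₀ = 1) (h₁₀ : i₁ ≠ i₀)
    (h₂₀ : i₂ ≠ i₀) (h₂₁ : i₂ ≠ i₁) (h : ℕ) : HasCriticalPerturbation h p c := by
  refine of_forall_coord_add (g := fun _ => I) hc contDiff_const i₁ (c p i₁).im
    fun η c' hη hc' hcj hcp => ?_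
  refine of_im_coord_ne_zero hc' (fun x => (hcj x i₀ h₁₀.symm).trans (hc₀ x)) h₂₀ h₂₁ ?_ h
  rw [hcp.self_of_nhds]
  simpa using hη

lemma of_coord_ne_zero (ha : ContDiff ℝ ∞ a) (ha₀ : a p i₀ ≠ 0) (h₁₀ : i₁ ≠ i₀)
    (h₂₀ : i₂ ≠ i₀) (h₂₁ : i₂ ≠ i₁) (h : ℕ) : HasCriticalPerturbation h p a := by
  have hai : ContDiff ℝ ∞ fun x => a x i₀ := contDiff_pi.1 ha i₀
  obtain ⟨θ, hθ, hθa⟩ := exists_contDiff_mul_eq_one hai ha₀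
  refine of_smul (c := fun x => Function.update (θ x • a x) i₀ 1) hai ha₀ ?_
    (of_coord_eq_one (contDiff_pi.2 fun j => ?_) (fun x => Function.update_self ..) h₁₀ h₂₀ h₂₁ h)
  · filter_upwards [hθa] with x hx
    ext j
    rcases eq_or_ne j i₀ with rfl | hj
    · simp
    · simp only [Pi.smul_apply, Function.update_of_ne hj, smul_eq_mul]
      linear_combination -(a x j) * hx
  · rcases eq_or_ne j i₀ with rfl | hj
    · simpa only [Function.update_self] using contDiff_const
    · simp only [Function.update_of_ne hj]
      exact hθ.mul (contDiff_pi.1 ha j)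

end HasCriticalPerturbation

theorem hasCriticalPerturbation (hι : 2 < Fintype.card ι) (ha : ContDiff ℝ ∞ a) (p : ι → ℝ)
    (h : ℕ) : HasCriticalPerturbation h p a := by
  obtain ⟨i₀, i₁, i₂, h₀₁, h₀₂, h₁₂⟩ := Fintype.two_lt_card_iff.1 hι
  refine .of_forall_coord_add (g := fun _ => 1) ha contDiff_const i₀ (a p i₀).re
    fun η c hη hc _ hcp => ?_
  refine .of_coord_ne_zero hc (fun hzero => hη ?_) h₀₁.symm h₀₂.symm h₁₂.symm h
  rw [hcp.self_of_nhds] at hzero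
  simpa using congrArg re hzero

end Perturbation

/-- Nirenberg-type perturbation lemma (Lemma 1.2 of the paper, on `M = ℝ^m`, `m ≥ 3`):
given a smooth complex vector field `L₀` with coefficients `a⁰ : ℝ^m → ℂ^m`, a point `p₀`,
`h ∈ ℕ` and `ε > 0`, there is a smooth complex vector field with coefficients `a`, at
`C^h`-distance less than `ε` from `a⁰`, such that every `C¹` solution `u` of `Lu = 0` on an
open neighborhood of `p₀` has `du(p₀) = 0`. -/
theorem statement0 (m : ℕ) (hm : 3 ≤ m)
    (a0 : (Fin m → ℝ) → (Fin m → ℂ)) (ha0 : ContDiff ℝ (⊤ : ℕ∞) a0)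
    (p₀ : Fin m → ℝ) (h : ℕ) (ε : ℝ) (hε : 0 < ε) :
    ∃ a : (Fin m → ℝ) → (Fin m → ℂ), ContDiff ℝ (⊤ : ℕ∞) a ∧
      (∀ x : Fin m → ℝ, ∀ j : ℕ, j ≤ h → ‖iteratedFDeriv ℝ j (a - a0) x‖ < ε) ∧
      (∀ U : Set (Fin m → ℝ), IsOpen U → p₀ ∈ U →
        ∀ u : (Fin m → ℝ) → ℂ, ContDiffOn ℝ 1 u U →
          (∀ x ∈ U, ∑ i : Fin m, a x i * fderiv ℝ u x (Pi.single i (1 : ℝ)) = 0) →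
          fderiv ℝ u p₀ = 0) := by
  obtain ⟨V, hV, hcrit⟩ :=
    hasCriticalPerturbation (by rw [Fintype.card_fin]; exact hm) ha0 p₀ h ε hε
  refine ⟨a0 + V, ha0.add hV.contDiff, fun x j hj => ?_, fun U hU hp u hu hsol => ?_⟩
  · rw [add_sub_cancel_left]
    exact hV.norm_lt x j hj
  · obtain ⟨v, hv, hvu⟩ := exists_contDiff_eventuallyEq (n := 1) (hU.mem_nhds hp) hu
    rw [← hvu.fderiv_eq]
    refine hcrit v hv ?_
    filter_upwards [hvu.eventuallyEq_nhds, hU.mem_nhds hp] with x hx hxU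
    rw [applyField_congr hx]
    exact hsol x hxU
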